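/- arXiv:2005.04354 — 2 statements merged into one kernel-verified Lean document; each statement's English description precedes it below -/
import Mathlib

section
/- Let θ ∈ (0, 1/2), let P = P_{T,θ} on {0,1}³ for the tree T with edge set {{1,2},{2,3}}, and let x_1,…,x_n be i.i.d. samples from P. The error probability of the maximum-weight spanning tree estimator with uniformly random tie-breaking equals Err_n := ℙ({Â_{1,3} > Â_{1,2}} ∪ {Â_{1,3} > Â_{2,3}}) + (1/2)·ℙ(Â_{2,3} > Â_{1,2} = Â_{1,3}) + (1/2)·ℙ(Â_{1,2} > Â_{2,3} = Â_{1,3}) + (2/3)·ℙ(Â_{1,2} = Â_{2,3} = Â_{1,3}), and it satisfies Err_n = (2f(n) − f̃(n))·(1 + o(n^{−1})); that is, n·( Err_n / (2f(n) − f̃(n)) − 1 ) → 0 as n → ∞. -/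
open scoped Classical BigOperators
open Filter

noncomputable section

/-- Symmetric pair weight `w(x i, x j)` lifted to unordered pairs. -/
def pairWeight (θ : ℝ) {p : ℕ} (x : Fin p → Bool) : Sym2 (Fin p) → ℝ :=
  Sym2.lift ⟨fun i j => if x i = x j then 1 - θ else θ, fun i j => by
    dsimp only
    by_cases h : x i = x j
    · rw [if_pos h, if_pos h.symm]
    · rw [if_neg h, if_neg (fun hh => h hh.symm)]⟩

/-- The homogeneous zero-external-field Ising tree distribution. -/
def isingP (θ : ℝ) {p : ℕ} (T : SimpleGraph (Fin p)) (x : Fin p → Bool) : ℝ :=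
  (1 / 2) * ∏ e ∈ T.edgeFinset, pairWeight θ x e

/-- Probability of an event `A` about `n` i.i.d. samples from pmf `P`. -/
def iidProb {p : ℕ} (P : (Fin p → Bool) → ℝ) (n : ℕ)
    (A : Set (Fin n → Fin p → Bool)) : ℝ :=
  ∑ xs : Fin n → Fin p → Bool, if xs ∈ A then ∏ k, P (xs k) else 0

/-- Empirical agreement weight. -/
def Ahat {p n : ℕ} (xs : Fin n → Fin p → Bool) (i j : Fin p) : ℝ :=
  ((Finset.univ.filter (fun k : Fin n => xs k i = xs k j)).card : ℝ) / n

/-- Empirical agreement weight on unordered pairs. -/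
def AhatSym {p n : ℕ} (xs : Fin n → Fin p → Bool) : Sym2 (Fin p) → ℝ :=
  Sym2.lift ⟨fun i j => Ahat xs i j, fun i j => by
    have h : (Finset.univ.filter fun k : Fin n => xs k i = xs k j)
        = (Finset.univ.filter fun k : Fin n => xs k j = xs k i) :=
      Finset.filter_congr (fun k _ => ⟨Eq.symm, Eq.symm⟩)
    simp only [Ahat, h]⟩

/-- The path (Markov chain) tree on 3 nodes with edges {1,2},{2,3}. -/
def chainA : SimpleGraph (Fin 3) := SimpleGraph.fromEdgeSet {s(0,1), s(1,2)}

def chainB : SimpleGraph (Fin 3) := SimpleGraph.fromEdgeSet {s(0,2), s(1,2)}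

def chainC : SimpleGraph (Fin 3) := SimpleGraph.fromEdgeSet {s(0,1), s(0,2)}

def path4 : SimpleGraph (Fin 4) := SimpleGraph.fromEdgeSet {s(0,1), s(1,2), s(2,3)}

def Kexp (θ : ℝ) : ℝ := -Real.log (1 - θ * (1 - Real.sqrt (4 * θ * (1 - θ))))

def sigmaSq (θ : ℝ) : ℝ := θ * Real.sqrt (4 * θ * (1 - θ)) * Real.exp (Kexp θ)

def zTheta (θ : ℝ) : ℝ := Real.sqrt (θ / (1 - θ))

def ftilde (θ : ℝ) (n : ℕ) : ℝ :=
  Real.exp (-(n : ℝ) * Kexp θ) / Real.sqrt (2 * Real.pi * sigmaSq θ * n)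
    * (1 + (1 - 3 * sigmaSq θ) / (8 * sigmaSq θ * n))

def fn (θ : ℝ) (n : ℕ) : ℝ :=
  ftilde θ n / (1 - zTheta θ)
    * (1 - zTheta θ * (1 + zTheta θ) / (2 * (1 - zTheta θ) ^ 2 * sigmaSq θ * n))

/-- Hamming distance. -/
def hamming {p : ℕ} (x y : Fin p → Bool) : ℕ :=
  (Finset.univ.filter (fun i => x i ≠ y i)).card

/-- Noisy (BSC with crossover probability q) version of a distribution. -/
def noisy (q : ℝ) {p : ℕ} (P : (Fin p → Bool) → ℝ) (y : Fin p → Bool) : ℝ :=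
  ∑ x : Fin p → Bool, q ^ hamming x y * (1 - q) ^ (p - hamming x y) * P x

def beta1 (θ q : ℝ) : ℝ :=
  ((1 - q) ^ 3 + q ^ 3) * (θ * (1 - θ) / 2) + q * (1 - q) * ((1 - θ * (1 - θ)) / 2)

def beta2 (θ q : ℝ) : ℝ :=
  ((1 - q) ^ 3 + q ^ 3) * (θ ^ 2 / 2) + q * (1 - q) * ((1 - θ ^ 2) / 2)

def Kq (θ q : ℝ) : ℝ :=
  -Real.log (1 - 4 * ((beta1 θ q + beta2 θ q) / 2 - Real.sqrt (beta1 θ q * beta2 θ q)))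

def mu2 (θ q : ℝ) : ℝ := 4 * Real.sqrt (beta1 θ q * beta2 θ q) * Real.exp (Kq θ q)

def zq (θ q : ℝ) : ℝ := Real.sqrt (beta2 θ q / beta1 θ q)

def ftildeq (θ q : ℝ) (n : ℕ) : ℝ :=
  Real.exp (-(n : ℝ) * Kq θ q) / Real.sqrt (2 * Real.pi * mu2 θ q * n)
    * (1 + (1 - 3 * mu2 θ q) / (8 * mu2 θ q * n))

def fnq (θ q : ℝ) (n : ℕ) : ℝ :=
  ftildeq θ q n / (1 - zq θ q)
    * (1 - zq θ q * (1 + zq θ q) / (2 * (1 - zq θ q) ^ 2 * mu2 θ q * n))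

/-- Marginal of a pmf on `{0,1}^p` on a single coordinate. -/
def marg1 {p : ℕ} (Q : (Fin p → Bool) → ℝ) (i : Fin p) (a : Bool) : ℝ :=
  ∑ x ∈ Finset.univ.filter (fun x : Fin p → Bool => x i = a), Q x

/-- Marginal of a pmf on `{0,1}^p` on a pair of coordinates. -/
def marg2 {p : ℕ} (Q : (Fin p → Bool) → ℝ) (i j : Fin p) (a b : Bool) : ℝ :=
  ∑ x ∈ Finset.univ.filter (fun x : Fin p → Bool => x i = a ∧ x j = b), Q x

/-- Kullback-Leibler divergence between pmfs on a finite type. -/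
def klDiv {X : Type*} [Fintype X] (Q P : X → ℝ) : ℝ :=
  ∑ x : X, Q x * Real.log (Q x / P x)

/-- Empirical mutual information between coordinates `i` and `j`. -/
def mutInf {p : ℕ} (Q : (Fin p → Bool) → ℝ) (i j : Fin p) : ℝ :=
  ∑ a : Bool, ∑ b : Bool,
    marg2 Q i j a b * Real.log (marg2 Q i j a b / (marg1 Q i a * marg1 Q j b))

end

/-- The error probability of the MWST estimator with uniformly random tie-breaking
for the 3-node chain, from `n` noiseless samples. -/
noncomputable def ErrProb (θ : ℝ) (n : ℕ) : ℝ :=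
  iidProb (isingP θ chainA) n
      {xs | Ahat xs 0 1 < Ahat xs 0 2 ∨ Ahat xs 1 2 < Ahat xs 0 2}
    + (1 / 2) * iidProb (isingP θ chainA) n
      {xs | Ahat xs 0 1 < Ahat xs 1 2 ∧ Ahat xs 0 1 = Ahat xs 0 2}
    + (1 / 2) * iidProb (isingP θ chainA) n
      {xs | Ahat xs 1 2 < Ahat xs 0 1 ∧ Ahat xs 1 2 = Ahat xs 0 2}
    + (2 / 3) * iidProb (isingP θ chainA) n
      {xs | Ahat xs 0 1 = Ahat xs 1 2 ∧ Ahat xs 1 2 = Ahat xs 0 2}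

/-!
Let `S₁` and `S₂` be the excesses of the agreement count of the absent edge `{1, 3}` over those of
the edges `{1, 2}` and `{2, 3}`. Except when both are nonnegative, the conditional error
probability is the sum of the errors of the two coin-tossing comparisons `S₁ ≥ 0` and `S₂ ≥ 0`,
which are equally likely by reflecting the chain; a Chernoff bound makes the exceptional event
exponentially rarer than either comparison error.

Tilting the samples by `z ^ (-S₁)` makes the law invariant under exchanging nodes `2` and `3`, which
negates `S₁`. Hence twice the error of one comparison is the expectation of `z ^ |S₁|` under the
tilted symmetric walk. The Fourier coefficients of the Poisson kernel are `z ^ |m|`, so this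
expectation is an integral of `exp (-n K) (1 - σ² (1 - cos u)) ^ n` against that kernel, and
Laplace's method carried to the first correction gives the factors `1 + (1 - 3σ²) / (8σ²n)` and
`1 - z / ((1 - z)² σ² n)` around the leading term.
-/

open Asymptotics MeasureTheory Real Topology

section Laplace

lemma tendsto_nat_mul_one_add_pow_sub_one {ε : ℕ → ℝ} {t : ℝ}
    (h : Tendsto (fun n : ℕ => (n : ℝ) ^ 2 * ε n) atTop (𝓝 t)) :
    Tendsto (fun n : ℕ => (n : ℝ) * ((1 + ε n) ^ n - 1)) atTop (𝓝 t) := by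
  have eventually_cast_ne_zero : ∀ᶠ n : ℕ in atTop, (n : ℝ) ≠ 0 :=
    (eventually_ne_atTop 0).mono fun n hn => Nat.cast_ne_zero.2 hn
  have inv_tendsto : Tendsto (fun n : ℕ => (n : ℝ)⁻¹) atTop (𝓝 0) :=
    tendsto_inv_atTop_nhds_zero_nat
  have ε_tendsto : Tendsto ε atTop (𝓝 0) := by
    have := (inv_tendsto.pow 2).mul h
    rw [zero_pow two_ne_zero, zero_mul] at this
    refine this.congr' ?_
    filter_upwards [eventually_cast_ne_zero] with n hn
    field_simp
  have log_tendsto :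
      Tendsto (fun n : ℕ => (n : ℝ) * (n * log (1 + ε n))) atTop (𝓝 t) := by
    have hlog := (hasDerivAt_log one_ne_zero).hasFDerivAt.hasFDerivWithinAt (s := Set.univ)
    simpa [pow_two, mul_assoc] using
      hlog.lim (c := fun n : ℕ => (n : ℝ) ^ 2) ε_tendsto (by simp) h
  have nat_mul_log_tendsto : Tendsto (fun n : ℕ => (n : ℝ) * log (1 + ε n)) atTop (𝓝 0) := by
    have := inv_tendsto.mul log_tendsto
    rw [zero_mul] at this
    refine this.congr' ?_
    filter_upwards [eventually_cast_ne_zero] with n hn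
    field_simp
  have hexp := (hasDerivAt_exp 0).hasFDerivAt.hasFDerivWithinAt (s := Set.univ)
  have exp_tendsto := hexp.lim (c := fun n : ℕ => (n : ℝ)) nat_mul_log_tendsto (by simp)
    log_tendsto
  simp only [zero_add, exp_zero, smul_eq_mul, ContinuousLinearMap.toSpanSingleton_apply,
    mul_one] at exp_tendsto
  refine exp_tendsto.congr' ?_
  filter_upwards [(ε_tendsto.const_add 1).eventually_const_lt (u := 0) (by norm_num)] with n hn
  rw [exp_nat_mul, exp_log hn]

lemma tendsto_div_sqrt_nat (x : ℝ) : Tendsto (fun n : ℕ => x / √(n : ℝ)) atTop (𝓝 0) :=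
  Tendsto.const_div_atTop (tendsto_sqrt_atTop.comp tendsto_natCast_atTop_atTop) x

lemma div_sqrt_pow_two_mul {y : ℝ} (hy : 0 ≤ y) (x : ℝ) (k : ℕ) :
    (x / √y) ^ (2 * k) = x ^ (2 * k) / y ^ k := by
  rw [div_pow, pow_mul √y, sq_sqrt hy]

lemma tendsto_pow_mul_comp_div_sqrt {g : ℝ → ℝ} {k : ℕ} {a : ℝ}
    (hg : (fun u => g u - a * u ^ (2 * k)) =o[𝓝 0] fun u => u ^ (2 * k)) (x : ℝ) :
    Tendsto (fun n : ℕ => (n : ℝ) ^ k * g (x / √n)) atTop (𝓝 (a * x ^ (2 * k))) := by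
  have scaled : (fun n : ℕ => (n : ℝ) ^ k * (g (x / √n) - a * (x / √n) ^ (2 * k))) =o[atTop]
      fun n : ℕ => (n : ℝ) ^ k * (x / √n) ^ (2 * k) :=
    (isBigO_refl _ _).mul_isLittleO (hg.comp_tendsto (tendsto_div_sqrt_nat x))
  have scaled_monomial : ∀ᶠ n : ℕ in atTop,
      (n : ℝ) ^ k * (x / √n) ^ (2 * k) = x ^ (2 * k) := by
    filter_upwards [eventually_gt_atTop 0] with n hn
    rw [div_sqrt_pow_two_mul n.cast_nonneg]
    field_simp
  have error_tendsto := (isLittleO_one_iff ℝ).1 <|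
    (scaled.congr' EventuallyEq.rfl scaled_monomial).trans_isBigO (isBigO_const_one ℝ _ _)
  have := error_tendsto.add_const (a * x ^ (2 * k))
  rw [zero_add] at this
  refine this.congr' ?_
  filter_upwards [scaled_monomial] with n hn
  linear_combination (-a) * hn

lemma exists_abs_le_mul_abs_pow_of_isCompact {s : Set ℝ} (hs : IsCompact s) {f : ℝ → ℝ}
    {k : ℕ} (hf : ContinuousOn f s) (h0 : f =O[𝓝 0] fun u => u ^ k) :
    ∃ C, 0 ≤ C ∧ ∀ u ∈ s, |f u| ≤ C * |u| ^ k := by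
  obtain ⟨c, hc, hfc⟩ := h0.exists_pos
  obtain ⟨δ, hδ, hnear⟩ := Metric.eventually_nhds_iff.1 hfc.bound
  obtain ⟨B, hB⟩ := hs.exists_bound_of_continuousOn hf
  refine ⟨max c (|B| / δ ^ k), le_max_of_le_left hc.le, fun u hu => ?_⟩
  rcases lt_or_ge |u| δ with hlt | hge
  · calc |f u| ≤ c * |u| ^ k := by simpa using hnear (by simpa using hlt)
      _ ≤ max c (|B| / δ ^ k) * |u| ^ k := by gcongr; exact le_max_left _ _
  · calc |f u| ≤ |B| := (hB u hu).trans (le_abs_self B)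
      _ = |B| / δ ^ k * δ ^ k := by field_simp
      _ ≤ max c (|B| / δ ^ k) * |u| ^ k := by gcongr; exact le_max_right _ _

lemma integrable_pow_mul_exp_neg_mul_sq {b : ℝ} (hb : 0 < b) (k : ℕ) :
    Integrable fun x : ℝ => x ^ k * exp (-b * x ^ 2) := by
  simpa using integrable_rpow_mul_exp_neg_mul_sq hb
    (s := k) (neg_one_lt_zero.trans_le k.cast_nonneg)

lemma integral_pow_mul_exp_neg_mul_sq {b : ℝ} (hb : 0 < b) {k : ℕ} (hk : Even k) :
    ∫ x : ℝ, x ^ k * exp (-b * x ^ 2) = b ^ (-((k : ℝ) + 1) / 2) * Gamma (((k : ℝ) + 1) / 2) := by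
  have half_line := integral_rpow_mul_exp_neg_mul_rpow (p := 2) (q := k) (b := b) two_pos
    (neg_one_lt_zero.trans_le k.cast_nonneg) hb
  simp only [rpow_natCast, rpow_ofNat] at half_line
  have even_integrand := integral_comp_abs (f := fun x : ℝ => x ^ k * exp (-b * x ^ 2))
  simp only [hk.pow_abs, sq_abs] at even_integrand
  rw [even_integrand, half_line]
  ring

lemma integral_pow_add_two_mul_exp_neg_mul_sq {b : ℝ} (hb : 0 < b) {k : ℕ} (hk : Even k) :
    ∫ x : ℝ, x ^ (k + 2) * exp (-b * x ^ 2)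
      = (k + 1) / (2 * b) * ∫ x : ℝ, x ^ k * exp (-b * x ^ 2) := by
  rw [integral_pow_mul_exp_neg_mul_sq hb hk, integral_pow_mul_exp_neg_mul_sq hb (hk.add even_two)]
  have Gamma_arg : (((k + 2 : ℕ) : ℝ) + 1) / 2 = ((k : ℝ) + 1) / 2 + 1 := by push_cast; ring
  have rpow_arg : -(((k + 2 : ℕ) : ℝ) + 1) / 2 = -((k : ℝ) + 1) / 2 - 1 := by push_cast; ring
  rw [Gamma_arg, rpow_arg, Gamma_add_one (by positivity), rpow_sub_one hb.ne']
  field_simp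

lemma integral_sq_mul_exp_neg_mul_sq {b : ℝ} (hb : 0 < b) :
    ∫ x : ℝ, x ^ 2 * exp (-b * x ^ 2) = √(π / b) / (2 * b) := by
  have := integral_pow_add_two_mul_exp_neg_mul_sq hb (k := 0) Even.zero
  simp only [zero_add, pow_zero, one_mul, integral_gaussian] at this
  rw [this]
  push_cast
  ring

lemma integral_pow_four_mul_exp_neg_mul_sq {b : ℝ} (hb : 0 < b) :
    ∫ x : ℝ, x ^ 4 * exp (-b * x ^ 2) = 3 * √(π / b) / (4 * b ^ 2) := by
  rw [integral_pow_add_two_mul_exp_neg_mul_sq hb (k := 2) even_two,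
    integral_sq_mul_exp_neg_mul_sq hb]
  push_cast
  field_simp
  ring

/-- The integrand of the first-order correction in Laplace's method for
`∫ u in -R..R, φ u ^ n * h u`: `n` times the difference between the integrand in the scaled
variable `x = u √n`, extended by zero, and its Gaussian limit. -/
noncomputable def laplaceCorrection (φ h : ℝ → ℝ) (R b h₀ : ℝ) (n : ℕ) (x : ℝ) : ℝ :=
  n * ((Set.Ioc (-(R * √n)) (R * √n)).indicator (fun y => φ (y / √n) ^ n * h (y / √n)) x
    - h₀ * exp (-b * x ^ 2))

variable {φ h : ℝ → ℝ} {R a b c h₀ h₂ : ℝ}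

lemma integrable_indicator_comp_div_sqrt (hφ : Continuous φ) (hh : Continuous h) (n : ℕ) :
    Integrable ((Set.Ioc (-(R * √n)) (R * √n)).indicator
      fun y => φ (y / √n) ^ n * h (y / √n)) := by
  have cont : Continuous fun y => φ (y / √n) ^ n * h (y / √n) := by fun_prop
  exact cont.integrableOn_Ioc.integrable_indicator measurableSet_Ioc

lemma integral_laplaceCorrection (hφ : Continuous φ) (hh : Continuous h) (hR : 0 ≤ R)
    (hb : 0 < b) {n : ℕ} (hn : n ≠ 0) :
    ∫ x, laplaceCorrection φ h R b h₀ n x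
      = n * (√n * (∫ u in -R..R, φ u ^ n * h u) - h₀ * √(π / b)) := by
  have hsqrt : √(n : ℝ) ≠ 0 := by positivity
  have rescale := intervalIntegral.integral_comp_div (a := -(R * √n)) (b := R * √n)
    (fun u => φ u ^ n * h u) hsqrt
  rw [neg_div, mul_div_cancel_right₀ R hsqrt, smul_eq_mul] at rescale
  simp only [laplaceCorrection]
  rw [integral_const_mul, integral_sub (integrable_indicator_comp_div_sqrt hφ hh n)
      ((integrable_exp_neg_mul_sq hb).const_mul h₀), integral_const_mul, integral_gaussian,
    integral_indicator measurableSet_Ioc,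
    ← intervalIntegral.integral_of_le (neg_le_self (by positivity)), rescale]

lemma tendsto_nat_mul_comp_div_sqrt_pow_sub_exp
    (hφ : (fun u => φ u - exp (-b * u ^ 2) - a * u ^ 4) =o[𝓝 0] fun u => u ^ 4) (x : ℝ) :
    Tendsto (fun n : ℕ => (n : ℝ) * (φ (x / √n) ^ n - exp (-b * x ^ 2))) atTop
      (𝓝 (a * x ^ 4 * exp (-b * x ^ 2))) := by
  have exp_tendsto : Tendsto (fun n : ℕ => exp (b * (x / √n) ^ 2)) atTop (𝓝 1) := by
    simpa using (((tendsto_div_sqrt_nat x).pow 2).const_mul b).rexp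
  have ratio_tendsto := (tendsto_pow_mul_comp_div_sqrt (k := 2) hφ x).mul exp_tendsto
  simp only [mul_one, mul_assoc] at ratio_tendsto
  refine ((tendsto_nat_mul_one_add_pow_sub_one ratio_tendsto).mul_const
    (exp (-b * x ^ 2))).congr' ?_
  filter_upwards [eventually_ne_atTop 0] with n hn
  have exp_pow : exp (-b * x ^ 2) = exp (-b * (x / √n) ^ 2) ^ n := by
    rw [← exp_nat_mul, div_pow, sq_sqrt n.cast_nonneg]
    field_simp
  have ratio : 1 + (φ (x / √n) - exp (-b * (x / √n) ^ 2)) * exp (b * (x / √n) ^ 2)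
      = φ (x / √n) * exp (b * (x / √n) ^ 2) := by
    rw [sub_mul, ← exp_add, neg_mul, neg_add_cancel, exp_zero]
    ring
  rw [ratio, exp_pow, mul_assoc, sub_mul, ← mul_pow, mul_assoc, ← exp_add, neg_mul,
    add_neg_cancel, exp_zero, mul_one, one_mul]

lemma tendsto_laplaceCorrection (hh : Continuous h) (hR : 0 < R)
    (hφ : (fun u => φ u - exp (-b * u ^ 2) - a * u ^ 4) =o[𝓝 0] fun u => u ^ 4)
    (hh₂ : (fun u => h u - h₀ - h₂ * u ^ 2) =o[𝓝 0] fun u => u ^ 2) (x : ℝ) :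
    Tendsto (fun n => laplaceCorrection φ h R b h₀ n x) atTop
      (𝓝 (h₀ * a * (x ^ 4 * exp (-b * x ^ 2)) + h₂ * (x ^ 2 * exp (-b * x ^ 2)))) := by
  have h_zero : h 0 = h₀ := by
    simpa [sub_eq_zero] using hh₂.isBigO.eq_zero_imp.self_of_nhds
  have φ_term := tendsto_nat_mul_comp_div_sqrt_pow_sub_exp hφ x
  have h_tendsto : Tendsto (fun n : ℕ => h (x / √n)) atTop (𝓝 h₀) :=
    h_zero ▸ (hh.tendsto 0).comp (tendsto_div_sqrt_nat x)
  have h_term := tendsto_pow_mul_comp_div_sqrt (k := 1) (g := fun u => h u - h₀) hh₂ x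
  have sum_tendsto := (φ_term.mul h_tendsto).add (h_term.mul_const (exp (-b * x ^ 2)))
  have limit_eq : a * x ^ 4 * exp (-b * x ^ 2) * h₀ + h₂ * x ^ (2 * 1) * exp (-b * x ^ 2)
      = h₀ * a * (x ^ 4 * exp (-b * x ^ 2)) + h₂ * (x ^ 2 * exp (-b * x ^ 2)) := by ring
  rw [limit_eq] at sum_tendsto
  refine sum_tendsto.congr' ?_
  filter_upwards [(tendsto_div_sqrt_nat x).eventually_mem (Ioo_mem_nhds (neg_lt_zero.2 hR) hR),
    eventually_gt_atTop 0] with n hx hn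
  have hsqrt : 0 < √(n : ℝ) := by positivity
  have x_mem : x ∈ Set.Ioc (-(R * √n)) (R * √n) := by
    rw [← neg_mul]
    exact ⟨(lt_div_iff₀ hsqrt).1 hx.1, (div_le_iff₀ hsqrt).1 hx.2.le⟩
  rw [laplaceCorrection, Set.indicator_of_mem x_mem]
  ring

lemma nat_mul_abs_pow_sub_pow_le {p q K x : ℝ} {n : ℕ} (hn : 2 ≤ n) (hc : 0 ≤ c)
    (hp : |p| ≤ exp (-c * (x / √n) ^ 2)) (hq : |q| ≤ exp (-c * (x / √n) ^ 2))
    (hpq : |p - q| ≤ K * (x / √n) ^ 4) :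
    n * |p ^ n - q ^ n| ≤ K * x ^ 4 * exp (-(c / 2) * x ^ 2) := by
  have hn_real : (2 : ℝ) ≤ n := by exact_mod_cast hn
  have max_pow_le : max |p| |q| ^ (n - 1) ≤ exp (-(c / 2) * x ^ 2) := by
    calc max |p| |q| ^ (n - 1) ≤ exp (-c * (x / √n) ^ 2) ^ (n - 1) := by
          gcongr
          exact max_le hp hq
      _ = exp (-(c * x ^ 2) * ((n - 1) / n)) := by
          rw [← exp_nat_mul, Nat.cast_pred (by lia), div_pow, sq_sqrt n.cast_nonneg]
          ring_nf
      _ ≤ exp (-(c / 2) * x ^ 2) := by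
          have half_le : (1 : ℝ) / 2 ≤ (n - 1) / n := by
            rw [div_le_div_iff₀ two_pos (by linarith)]
            linarith
          rw [exp_le_exp]
          nlinarith [mul_nonneg hc (sq_nonneg x)]
  have hK : 0 ≤ K * (x / √n) ^ 4 := (abs_nonneg _).trans hpq
  calc n * |p ^ n - q ^ n| ≤ n * (|p - q| * n * max |p| |q| ^ (n - 1)) := by
        gcongr
        exact abs_pow_sub_pow_le ..
    _ ≤ n * (K * (x / √n) ^ 4 * n * exp (-(c / 2) * x ^ 2)) := by gcongr
    _ = K * x ^ 4 * exp (-(c / 2) * x ^ 2) := by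
        rw [div_sqrt_pow_two_mul n.cast_nonneg x 2]
        field_simp

lemma abs_laplaceCorrection_le_of_mem {B K L x : ℝ} {n : ℕ} (hn : 2 ≤ n) (hc : 0 ≤ c)
    (hcb : c ≤ b) (hx : x ∈ Set.Ioc (-(R * √n)) (R * √n))
    (hφ_exp : |φ (x / √n)| ≤ exp (-c * (x / √n) ^ 2))
    (hφ_sub : |φ (x / √n) - exp (-b * (x / √n) ^ 2)| ≤ K * (x / √n) ^ 4)
    (hh : |h (x / √n)| ≤ B) (hh_sub : |h (x / √n) - h₀| ≤ L * (x / √n) ^ 2) :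
    |laplaceCorrection φ h R b h₀ n x|
      ≤ (K * B * x ^ 4 + L * x ^ 2) * exp (-(c / 2) * x ^ 2) := by
  have hn_pos : (0 : ℝ) < n := by positivity
  set u := x / √n with hu
  have u_sq : u ^ 2 = x ^ 2 / n := by rw [hu, div_pow, sq_sqrt n.cast_nonneg]
  have exp_pow : exp (-b * u ^ 2) ^ n = exp (-b * x ^ 2) := by
    rw [← exp_nat_mul, u_sq]
    field_simp
  have exp_le : exp (-b * x ^ 2) ≤ exp (-(c / 2) * x ^ 2) := by
    rw [exp_le_exp]
    nlinarith [sq_nonneg x]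
  have exp_le_u : |exp (-b * u ^ 2)| ≤ exp (-c * u ^ 2) := by
    rw [abs_exp, exp_le_exp]
    nlinarith [sq_nonneg u]
  have pow_sub := nat_mul_abs_pow_sub_pow_le hn hc hφ_exp exp_le_u hφ_sub
  rw [exp_pow] at pow_sub
  rw [laplaceCorrection, Set.indicator_of_mem hx, abs_mul, abs_of_pos hn_pos]
  calc n * |φ u ^ n * h u - h₀ * exp (-b * x ^ 2)|
      = n * |(φ u ^ n - exp (-b * x ^ 2)) * h u + exp (-b * x ^ 2) * (h u - h₀)| := by ring_nf
    _ ≤ n * (|φ u ^ n - exp (-b * x ^ 2)| * |h u| + exp (-b * x ^ 2) * |h u - h₀|) := by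
        grw [abs_add_le, abs_mul, abs_mul, abs_exp]
    _ = n * |φ u ^ n - exp (-b * x ^ 2)| * |h u| + exp (-b * x ^ 2) * (n * |h u - h₀|) := by ring
    _ ≤ K * x ^ 4 * exp (-(c / 2) * x ^ 2) * B
          + exp (-(c / 2) * x ^ 2) * (n * (L * (x ^ 2 / n))) := by
        have : 0 ≤ K * x ^ 4 * exp (-(c / 2) * x ^ 2) := le_trans (by positivity) pow_sub
        rw [u_sq] at hh_sub
        gcongr
    _ = (K * B * x ^ 4 + L * x ^ 2) * exp (-(c / 2) * x ^ 2) := by field_simp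

lemma abs_laplaceCorrection_le_of_notMem {x : ℝ} {n : ℕ} (hR : 0 < R) (hc : 0 ≤ c)
    (hcb : c ≤ b) (hx : x ∉ Set.Ioc (-(R * √n)) (R * √n)) :
    |laplaceCorrection φ h R b h₀ n x| ≤ |h₀| / R ^ 2 * x ^ 2 * exp (-(c / 2) * x ^ 2) := by
  have nat_le : (n : ℝ) ≤ x ^ 2 / R ^ 2 := by
    have R_sqrt_le : R * √n ≤ |x| := by
      rw [Set.mem_Ioc, not_and_or, not_lt, not_le] at hx
      exact le_abs.2 (hx.symm.imp le_of_lt fun hle => le_neg.2 hle)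
    rw [le_div_iff₀ (by positivity), ← sq_abs x]
    calc (n : ℝ) * R ^ 2 = (R * √n) ^ 2 := by rw [mul_pow, sq_sqrt n.cast_nonneg, mul_comm]
      _ ≤ |x| ^ 2 := by gcongr
  have exp_le : exp (-b * x ^ 2) ≤ exp (-(c / 2) * x ^ 2) := by
    rw [exp_le_exp]
    nlinarith [sq_nonneg x]
  rw [laplaceCorrection, Set.indicator_of_notMem hx, zero_sub, mul_neg, abs_neg, abs_mul,
    abs_mul, abs_exp, Nat.abs_cast]
  calc n * (|h₀| * exp (-b * x ^ 2))
      ≤ x ^ 2 / R ^ 2 * (|h₀| * exp (-(c / 2) * x ^ 2)) := by gcongr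
    _ = |h₀| / R ^ 2 * x ^ 2 * exp (-(c / 2) * x ^ 2) := by ring

lemma exists_abs_laplaceCorrection_le (hφ : Continuous φ) (hh : Continuous h) (hR : 0 < R)
    (hc : 0 ≤ c) (hcb : c ≤ b)
    (hφ_exp : ∀ u ∈ Set.Icc (-R) R, |φ u| ≤ exp (-c * u ^ 2))
    (hφ₄ : (fun u => φ u - exp (-b * u ^ 2)) =O[𝓝 0] fun u => u ^ 4)
    (hh₂ : (fun u => h u - h₀) =O[𝓝 0] fun u => u ^ 2) :
    ∃ A D, ∀ n ≥ 2, ∀ x, |laplaceCorrection φ h R b h₀ n x|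
      ≤ A * (x ^ 4 * exp (-(c / 2) * x ^ 2)) + D * (x ^ 2 * exp (-(c / 2) * x ^ 2)) := by
  obtain ⟨K, hK, φ_sub_le⟩ := exists_abs_le_mul_abs_pow_of_isCompact
    (isCompact_Icc (a := -R) (b := R)) (by fun_prop) hφ₄
  obtain ⟨L, hL, h_sub_le⟩ := exists_abs_le_mul_abs_pow_of_isCompact
    (isCompact_Icc (a := -R) (b := R)) (by fun_prop) hh₂
  obtain ⟨B, h_le⟩ := isCompact_Icc.exists_bound_of_continuousOn
    (hh.continuousOn (s := Set.Icc (-R) R))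
  refine ⟨K * |B|, L + |h₀| / R ^ 2, fun n hn x => ?_⟩
  by_cases hx : x ∈ Set.Ioc (-(R * √n)) (R * √n)
  · have hsqrt : 0 < √(n : ℝ) := by positivity
    have hu : x / √n ∈ Set.Icc (-R) R := by
      rw [Set.mem_Icc, le_div_iff₀ hsqrt, div_le_iff₀ hsqrt, neg_mul]
      exact ⟨hx.1.le, hx.2⟩
    have bound := abs_laplaceCorrection_le_of_mem hn hc hcb hx (hφ_exp _ hu)
      (by simpa only [Even.pow_abs (n := 4) (by decide)] using φ_sub_le _ hu)
      ((h_le _ hu).trans (le_abs_self B))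
      (by simpa only [sq_abs] using h_sub_le _ hu)
    have : 0 ≤ |h₀| / R ^ 2 * (x ^ 2 * exp (-(c / 2) * x ^ 2)) := by positivity
    linarith
  · have bound := abs_laplaceCorrection_le_of_notMem (φ := φ) (h := h) (h₀ := h₀) hR hc hcb hx
    have : 0 ≤ K * |B| * (x ^ 4 * exp (-(c / 2) * x ^ 2)) := by positivity
    have : 0 ≤ L * (x ^ 2 * exp (-(c / 2) * x ^ 2)) := by positivity
    linarith

theorem tendsto_laplace_integral (hφ : Continuous φ) (hh : Continuous h) (hR : 0 < R)
    (hb : 0 < b) (hc : 0 < c)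
    (hφ_exp : ∀ u ∈ Set.Icc (-R) R, |φ u| ≤ exp (-c * u ^ 2))
    (hφ₄ : (fun u => φ u - exp (-b * u ^ 2) - a * u ^ 4) =o[𝓝 0] fun u => u ^ 4)
    (hh₂ : (fun u => h u - h₀ - h₂ * u ^ 2) =o[𝓝 0] fun u => u ^ 2) :
    Tendsto (fun n : ℕ => (n : ℝ) *
        (√n * (∫ u in -R..R, φ u ^ n * h u) - h₀ * √(π / b))) atTop
      (𝓝 (√(π / b) * (3 * a * h₀ / (4 * b ^ 2) + h₂ / (2 * b)))) := by
  have hφ₄_bigO : (fun u => φ u - exp (-b * u ^ 2)) =O[𝓝 0] fun u => u ^ 4 := by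
    simpa using hφ₄.isBigO.add (isBigO_const_mul_self a (fun u : ℝ => u ^ 4) (𝓝 0))
  have hh₂_bigO : (fun u => h u - h₀) =O[𝓝 0] fun u => u ^ 2 := by
    simpa using hh₂.isBigO.add (isBigO_const_mul_self h₂ (fun u : ℝ => u ^ 2) (𝓝 0))
  have hc' : 0 < min c b := lt_min hc hb
  obtain ⟨A, D, dominated⟩ := exists_abs_laplaceCorrection_le hφ hh hR hc'.le
    (min_le_right c b) (fun u hu => (hφ_exp u hu).trans <| exp_le_exp.2 <|
      mul_le_mul_of_nonneg_right (neg_le_neg (min_le_left c b)) (sq_nonneg u)) hφ₄_bigO hh₂_bigO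
  have integral_tendsto := tendsto_integral_filter_of_dominated_convergence (μ := volume) _
    (Eventually.of_forall fun n => (((integrable_indicator_comp_div_sqrt hφ hh n).sub
      ((integrable_exp_neg_mul_sq hb).const_mul h₀)).const_mul (n : ℝ)).aestronglyMeasurable)
    ((eventually_ge_atTop 2).mono fun n hn => Eventually.of_forall (dominated n hn))
    (((integrable_pow_mul_exp_neg_mul_sq (half_pos hc') 4).const_mul A).add
      ((integrable_pow_mul_exp_neg_mul_sq (half_pos hc') 2).const_mul D))
    (Eventually.of_forall fun x => tendsto_laplaceCorrection hh hR hφ₄ hh₂ x)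
  have limit_eq : ∫ x : ℝ, h₀ * a * (x ^ 4 * exp (-b * x ^ 2)) + h₂ * (x ^ 2 * exp (-b * x ^ 2))
      = √(π / b) * (3 * a * h₀ / (4 * b ^ 2) + h₂ / (2 * b)) := by
    rw [integral_add ((integrable_pow_mul_exp_neg_mul_sq hb 4).const_mul _)
        ((integrable_pow_mul_exp_neg_mul_sq hb 2).const_mul _), integral_const_mul,
      integral_const_mul, integral_sq_mul_exp_neg_mul_sq hb,
      integral_pow_four_mul_exp_neg_mul_sq hb]
    ring
  rw [limit_eq] at integral_tendsto
  refine integral_tendsto.congr' ?_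
  filter_upwards [eventually_ne_atTop 0] with n hn
  exact integral_laplaceCorrection hφ hh hR.le hb hn

end Laplace

section CosineExpansion

lemma cos_sub_quartic_isLittleO :
    (fun u : ℝ => cos u - (1 - u ^ 2 / 2 + u ^ 4 / 24)) =o[𝓝 0] fun u => u ^ 4 := by
  have mul_I_tendsto : Tendsto (fun u : ℝ => (u : ℂ) * Complex.I) (𝓝 0) (𝓝 0) := by
    simpa using (Complex.continuous_ofReal.mul_const Complex.I).tendsto 0
  have taylor := (Complex.exp_sub_sum_range_succ_isLittleO_pow 4).comp_tendsto mul_I_tendsto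
  refine ((isBigO_of_le _ fun u => ?_).trans_isLittleO taylor).trans_isBigO
    (isBigO_of_le _ fun u => by simp)
  rw [norm_eq_abs]
  refine le_of_eq_of_le (congrArg _ ?_) (Complex.abs_re_le_norm _)
  have taylor_sum : ∑ i ∈ Finset.range 5, ((u : ℂ) * Complex.I) ^ i / (i.factorial : ℂ)
      = ((1 - u ^ 2 / 2 + u ^ 4 / 24 : ℝ) : ℂ) + ((u - u ^ 3 / 6 : ℝ) : ℂ) * Complex.I := by
    simp only [Finset.sum_range_succ, Finset.sum_range_zero, mul_pow, Complex.I_sq,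
      Complex.I_pow_three, Complex.I_pow_four, Nat.factorial]
    push_cast
    ring
  rw [Function.comp_apply, taylor_sum, Complex.sub_re, Complex.exp_ofReal_mul_I_re,
    Complex.add_re, Complex.re_ofReal_mul, Complex.ofReal_re, Complex.I_re, mul_zero, add_zero]

lemma one_sub_cos_sub_sq_isLittleO :
    (fun u : ℝ => 1 - cos u - u ^ 2 / 2) =o[𝓝 0] fun u => u ^ 2 := by
  have pow_lt : (fun u : ℝ => u ^ 4) =o[𝓝 0] fun u => u ^ 2 := isLittleO_pow_pow (by norm_num)
  refine ((cos_sub_quartic_isLittleO.trans pow_lt).neg_left.sub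
    (pow_lt.const_mul_left (1 / 24))).congr_left fun u => ?_
  ring

lemma exp_neg_mul_sq_sub_quartic_isLittleO (b : ℝ) :
    (fun u : ℝ => exp (-b * u ^ 2) - (1 - b * u ^ 2 + b ^ 2 * u ^ 4 / 2)) =o[𝓝 0]
      fun u => u ^ 4 := by
  have arg_tendsto : Tendsto (fun u : ℝ => -b * u ^ 2) (𝓝 0) (𝓝 0) := by
    simpa using (by fun_prop : Continuous fun u : ℝ => -b * u ^ 2).tendsto 0
  refine (((exp_sub_sum_range_succ_isLittleO_pow 2).comp_tendsto arg_tendsto).trans_isBigO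
    ?_).congr_left fun u => ?_
  · refine (isBigO_const_mul_self (b ^ 2) (fun u : ℝ => u ^ 4) (𝓝 0)).congr_left fun u => ?_
    simp only [Function.comp_apply]
    ring
  · simp only [Finset.sum_range_succ, Finset.sum_range_zero, Nat.factorial, Function.comp_apply]
    push_cast
    ring

lemma one_sub_mul_one_sub_cos_sub_exp_isLittleO (s : ℝ) :
    (fun u : ℝ => 1 - s * (1 - cos u) - exp (-(s / 2) * u ^ 2) - (s / 24 - s ^ 2 / 8) * u ^ 4)
      =o[𝓝 0] fun u => u ^ 4 := by
  refine ((cos_sub_quartic_isLittleO.const_mul_left s).sub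
    (exp_neg_mul_sq_sub_quartic_isLittleO (s / 2))).congr_left fun u => ?_
  ring

lemma abs_one_sub_mul_one_sub_cos_le_exp {s u : ℝ} (hs₀ : 0 ≤ s) (hs₁ : s ≤ 1) (hu : |u| ≤ π) :
    |1 - s * (1 - cos u)| ≤ exp (-(min s (1 - s) * (2 / π ^ 2)) * u ^ 2) := by
  have hm₀ : 0 ≤ min s (1 - s) := le_min hs₀ (sub_nonneg.2 hs₁)
  have hms := min_le_left s (1 - s)
  have hms' := min_le_right s (1 - s)
  have cos_le : 2 / π ^ 2 * u ^ 2 ≤ 1 - cos u := by linarith [cos_le_one_sub_mul_cos_sq hu]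
  calc |1 - s * (1 - cos u)| ≤ 1 - min s (1 - s) * (1 - cos u) := by
        rw [abs_le]
        constructor <;> nlinarith [neg_one_le_cos u, cos_le_one u]
    _ ≤ 1 - min s (1 - s) * (2 / π ^ 2 * u ^ 2) := by gcongr
    _ ≤ exp (-(min s (1 - s) * (2 / π ^ 2)) * u ^ 2) := by
        linarith [add_one_le_exp (-(min s (1 - s) * (2 / π ^ 2)) * u ^ 2)]

end CosineExpansion

section PoissonKernel

/-- The Poisson kernel of the unit disc at the real point `z`, as a function of the angle `u` on
the unit circle. -/
noncomputable def circlePoissonKernel (z u : ℝ) : ℝ :=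
  poissonKernel 0 (z : ℂ) (circleMap 0 1 u)

lemma circlePoissonKernel_eq (z u : ℝ) :
    circlePoissonKernel z u = (1 - z ^ 2) / ((1 - z) ^ 2 + 2 * z * (1 - cos u)) := by
  have norm_sq_sub : ‖circleMap 0 1 u - z‖ ^ 2 = (1 - z) ^ 2 + 2 * z * (1 - cos u) := by
    rw [← Complex.normSq_eq_norm_sq, Complex.normSq_apply]
    simp only [circleMap, zero_add, Complex.ofReal_one, one_mul, Complex.sub_re, Complex.sub_im,
      Complex.exp_ofReal_mul_I_re, Complex.exp_ofReal_mul_I_im, Complex.ofReal_re,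
      Complex.ofReal_im, sub_zero]
    linear_combination sin_sq_add_cos_sq u
  rw [circlePoissonKernel, poissonKernel_def]
  simp [norm_sq_sub]

variable {z : ℝ}

lemma circlePoissonKernel_denom_pos (hz : |z| < 1) (u : ℝ) :
    0 < (1 - z) ^ 2 + 2 * z * (1 - cos u) := by
  have z_mul_cos_le : z * cos u ≤ |z| := by
    calc z * cos u ≤ |z| * |cos u| := (le_abs_self _).trans_eq (abs_mul z (cos u))
      _ ≤ |z| := mul_le_of_le_one_right (abs_nonneg z) (abs_cos_le_one u)
  have : 0 < (1 - |z|) ^ 2 := by have := sub_pos.2 hz; positivity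
  linarith [sq_abs z]

lemma continuous_circlePoissonKernel (hz : |z| < 1) : Continuous (circlePoissonKernel z) := by
  rw [funext (circlePoissonKernel_eq z)]
  exact continuous_const.div (by fun_prop) fun u => (circlePoissonKernel_denom_pos hz u).ne'

lemma integral_circlePoissonKernel_mul_cos_nat (hz : |z| < 1) (m : ℕ) :
    ∫ u in -π..π, circlePoissonKernel z u * cos (m * u) = 2 * π * z ^ m := by
  have harmonic : InnerProductSpace.HarmonicOnNhd (fun ζ : ℂ => (ζ ^ m).re)
      (Metric.closedBall 0 1) :=
    fun ζ _ => AnalyticAt.harmonicAt_re (f := fun ζ => ζ ^ m) (by fun_prop)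
  have hz_mem : (z : ℂ) ∈ Metric.ball 0 1 := by simpa using hz
  have poisson := harmonic.circleAverage_poissonKernel_smul hz_mem
  have integrand_eq (u : ℝ) :
      (poissonKernel 0 (z : ℂ) • fun ζ : ℂ => (ζ ^ m).re) (circleMap 0 1 u)
        = circlePoissonKernel z u * cos (m * u) := by
    simp only [Pi.smul_apply', smul_eq_mul, circlePoissonKernel]
    rw [circleMap_zero, Complex.ofReal_one, one_mul, ← Complex.exp_nat_mul, ← mul_assoc]
    exact_mod_cast congrArg _ (Complex.exp_ofReal_mul_I_re (m * u))
  have periodic : Function.Periodic (fun u => circlePoissonKernel z u * cos (m * u)) (2 * π) := by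
    intro u
    simp only [circlePoissonKernel_eq, cos_add_two_pi, mul_add, cos_add_nat_mul_two_pi]
  have shift := periodic.intervalIntegral_add_eq (-π) 0
  rw [zero_add, show -π + 2 * π = π by ring] at shift
  rw [circleAverage_def, intervalIntegral.integral_congr fun u _ => integrand_eq u, smul_eq_mul,
    ← shift, ← Complex.ofReal_pow, Complex.ofReal_re] at poisson
  rw [← poisson, mul_inv_cancel_left₀ (by positivity)]

lemma integral_circlePoissonKernel_mul_cos_int (hz : |z| < 1) (m : ℤ) :
    ∫ u in -π..π, circlePoissonKernel z u * cos (m * u) = 2 * π * z ^ m.natAbs := by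
  rw [← integral_circlePoissonKernel_mul_cos_nat hz]
  rcases Int.natAbs_eq m with hm | hm <;> (rw [hm]; simp)

lemma circlePoissonKernel_sub_quadratic_isLittleO (hz : |z| < 1) :
    (fun u => circlePoissonKernel z u - (1 + z) / (1 - z)
        - -((1 + z) / (1 - z) * (z / (1 - z) ^ 2)) * u ^ 2) =o[𝓝 0] fun u => u ^ 2 := by
  have hz' : 1 - z ≠ 0 := by linarith [(abs_lt.1 hz).2]
  have deriv : HasDerivAt (fun w : ℝ => (1 - z ^ 2) / ((1 - z) ^ 2 + 2 * z * w))
      (-(2 * ((1 + z) / (1 - z) * (z / (1 - z) ^ 2)))) 0 := by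
    have denom_deriv : HasDerivAt (fun w : ℝ => (1 - z) ^ 2 + 2 * z * w) (2 * z) 0 := by
      simpa using ((hasDerivAt_id (0 : ℝ)).const_mul (2 * z)).const_add ((1 - z) ^ 2)
    have quotient_deriv := (hasDerivAt_const (0 : ℝ) (1 - z ^ 2)).fun_div denom_deriv
      (by simpa using hz')
    refine quotient_deriv.congr_deriv ?_
    rw [mul_zero, add_zero]
    field_simp
    ring
  have one_sub_cos_tendsto : Tendsto (fun u : ℝ => 1 - cos u) (𝓝 0) (𝓝 0) := by
    simpa using (by fun_prop : Continuous fun u : ℝ => 1 - cos u).tendsto 0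
  have one_sub_cos_bigO : (fun u : ℝ => 1 - cos u) =O[𝓝 0] fun u => u ^ 2 := by
    refine (one_sub_cos_sub_sq_isLittleO.isBigO.add
      (isBigO_const_mul_self (1 / 2) (fun u : ℝ => u ^ 2) (𝓝 0))).congr_left fun u => ?_
    ring
  have linearized := (deriv.isLittleO.comp_tendsto one_sub_cos_tendsto).trans_isBigO
    (one_sub_cos_bigO.congr_left fun u => by simp)
  refine (linearized.add (one_sub_cos_sub_sq_isLittleO.const_mul_left
    (-(2 * ((1 + z) / (1 - z) * (z / (1 - z) ^ 2)))))).congr_left fun u => ?_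
  have value_at_zero : (1 - z ^ 2) / ((1 - z) ^ 2 + 2 * z * 0) = (1 + z) / (1 - z) := by
    field_simp
    ring
  simp only [Function.comp_apply, value_at_zero, circlePoissonKernel_eq, smul_eq_mul, sub_zero]
  ring

end PoissonKernel

section IidExpectation

/-- The expectation of a statistic `F` of `n` i.i.d. samples with weights `P`. The total mass of
`P` is not required to be one, so that tilted weights are covered. -/
def iidExpect {Ω R : Type*} [Fintype Ω] [CommSemiring R] (P : Ω → R) (n : ℕ)
    (F : (Fin n → Ω) → R) : R :=
  ∑ xs : Fin n → Ω, (∏ k, P (xs k)) * F xs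

variable {Ω : Type*} [Fintype Ω] {n : ℕ}

lemma iidExpect_prod {R : Type*} [CommSemiring R] (P g : Ω → R) :
    iidExpect P n (fun xs => ∏ k, g (xs k)) = (∑ x, P x * g x) ^ n := by
  simp only [iidExpect, ← Finset.prod_mul_distrib, Fintype.sum_pow]

lemma iidExpect_comp_equiv {R : Type*} [CommSemiring R] {P : Ω → R} (e : Ω ≃ Ω)
    (hP : ∀ x, P (e x) = P x) (F : (Fin n → Ω) → R) :
    iidExpect P n (fun xs => F fun k => e (xs k)) = iidExpect P n F :=
  Fintype.sum_equiv (Equiv.piCongrRight fun _ => e) _ _ fun xs => by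
    simp only [Equiv.piCongrRight_apply, Pi.map_apply, hP]
    rfl

lemma iidExpect_add {R : Type*} [CommSemiring R] (P : Ω → R) (F G : (Fin n → Ω) → R) :
    iidExpect P n (fun xs => F xs + G xs) = iidExpect P n F + iidExpect P n G := by
  simp only [iidExpect, mul_add, Finset.sum_add_distrib]

lemma iidExpect_const_mul {R : Type*} [CommSemiring R] (P : Ω → R) (c : R)
    (F : (Fin n → Ω) → R) :
    iidExpect P n (fun xs => c * F xs) = c * iidExpect P n F := by
  simp only [iidExpect, mul_left_comm _ c, Finset.mul_sum]

lemma iidExpect_mono {P : Ω → ℝ} (hP : ∀ x, 0 ≤ P x) {F G : (Fin n → Ω) → ℝ}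
    (hFG : ∀ xs, F xs ≤ G xs) : iidExpect P n F ≤ iidExpect P n G :=
  Finset.sum_le_sum fun xs _ =>
    mul_le_mul_of_nonneg_left (hFG xs) (Finset.prod_nonneg fun k _ => hP (xs k))

lemma abs_iidExpect_sub_le {P : Ω → ℝ} (hP : ∀ x, 0 ≤ P x) {F G H : (Fin n → Ω) → ℝ}
    (hFG : ∀ xs, |F xs - G xs| ≤ H xs) :
    |iidExpect P n F - iidExpect P n G| ≤ iidExpect P n H := by
  simp only [iidExpect, ← Finset.sum_sub_distrib, ← mul_sub]
  refine (Finset.abs_sum_le_sum_abs _ _).trans (Finset.sum_le_sum fun xs _ => ?_)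
  have weight_nonneg : 0 ≤ ∏ k, P (xs k) := Finset.prod_nonneg fun k _ => hP (xs k)
  rw [abs_mul, abs_of_nonneg weight_nonneg]
  exact mul_le_mul_of_nonneg_left (hFG xs) weight_nonneg

lemma prod_zpow_eq_zpow_sum {ι G : Type*} [CommGroupWithZero G] {y : G} (hy : y ≠ 0)
    (t : Finset ι) (d : ι → ℤ) : ∏ k ∈ t, y ^ d k = y ^ ∑ k ∈ t, d k := by
  induction t using Finset.induction_on with
  | empty => simp
  | insert i t hi ih => rw [Finset.prod_insert hi, Finset.sum_insert hi, zpow_add₀ hy, ih]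

lemma iidExpect_mul_zpow {K : Type*} [Field K] {z : K} (hz : z ≠ 0) (Q : Ω → K) (d : Ω → ℤ)
    (F : (Fin n → Ω) → K) :
    iidExpect (fun x => Q x * z ^ d x) n F
      = iidExpect Q n fun xs => z ^ (∑ k, d (xs k)) * F xs := by
  simp only [iidExpect, Finset.prod_mul_distrib, prod_zpow_eq_zpow_sum hz, mul_assoc]

lemma iidExpect_indicator_nonneg_le_pow {P : Ω → ℝ} (hP : ∀ x, 0 ≤ P x) (d d' : Ω → ℤ)
    {y y' : ℝ} (hy : 1 ≤ y) (hy' : 1 ≤ y') :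
    iidExpect P n (fun xs => if 0 ≤ ∑ k, d (xs k) ∧ 0 ≤ ∑ k, d' (xs k) then 1 else 0)
      ≤ (∑ x, P x * (y ^ d x * y' ^ d' x)) ^ n := by
  rw [← iidExpect_prod]
  refine iidExpect_mono hP fun xs => ?_
  rw [Finset.prod_mul_distrib, prod_zpow_eq_zpow_sum (by positivity),
    prod_zpow_eq_zpow_sum (by positivity)]
  split_ifs with h
  · exact one_le_mul_of_one_le_of_one_le (one_le_zpow₀ hy h.1) (one_le_zpow₀ hy' h.2)
  · positivity

lemma iidExpect_cos_sum {Q : Ω → ℝ} {d : Ω → ℤ} {u : ℝ} (h_sin : ∑ x, Q x * sin (d x * u) = 0) :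
    iidExpect Q n (fun xs => cos ((∑ k, d (xs k) : ℤ) * u)) = (∑ x, Q x * cos (d x * u)) ^ n := by
  have charFun_eq : ∑ x, (Q x : ℂ) * Complex.exp ((d x * u : ℝ) * Complex.I)
      = ((∑ x, Q x * cos (d x * u) : ℝ) : ℂ) := by
    apply Complex.ext
    · simp only [Complex.re_sum, Complex.re_ofReal_mul, Complex.exp_ofReal_mul_I_re,
        Complex.ofReal_re]
    · simp only [Complex.im_sum, Complex.im_ofReal_mul, Complex.exp_ofReal_mul_I_im,
        Complex.ofReal_im, h_sin]
  have pow_eq := iidExpect_prod (n := n) (fun x => (Q x : ℂ))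
    fun x => Complex.exp ((d x * u : ℝ) * Complex.I)
  rw [charFun_eq, ← Complex.ofReal_pow] at pow_eq
  rw [← Complex.ofReal_re ((∑ x, Q x * cos (d x * u)) ^ n), ← pow_eq, iidExpect, iidExpect,
    Complex.re_sum]
  refine Finset.sum_congr rfl fun xs _ => ?_
  rw [← Complex.ofReal_prod, Complex.re_ofReal_mul, ← Complex.exp_sum, ← Finset.sum_mul,
    ← Complex.ofReal_sum, Complex.exp_ofReal_mul_I_re, ← Finset.sum_mul, Int.cast_sum]

lemma iidExpect_pow_natAbs_sum {z : ℝ} (hz : |z| < 1) {Q : Ω → ℝ} {d : Ω → ℤ}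
    (h_sin : ∀ u, ∑ x, Q x * sin (d x * u) = 0) :
    iidExpect Q n (fun xs => z ^ (∑ k, d (xs k)).natAbs)
      = (2 * π)⁻¹ * ∫ u in -π..π, (∑ x, Q x * cos (d x * u)) ^ n * circlePoissonKernel z u := by
  have integrand_eq (u : ℝ) : (∑ x, Q x * cos (d x * u)) ^ n * circlePoissonKernel z u
      = ∑ xs : Fin n → Ω, (∏ k, Q (xs k)) *
          (circlePoissonKernel z u * cos ((∑ k, d (xs k) : ℤ) * u)) := by
    rw [← iidExpect_cos_sum (h_sin u), iidExpect, Finset.sum_mul]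
    exact Finset.sum_congr rfl fun xs _ => by ring
  have hcont := continuous_circlePoissonKernel hz
  simp only [integrand_eq]
  rw [intervalIntegral.integral_finsetSum fun xs _ =>
    Continuous.intervalIntegrable (by fun_prop) _ _, iidExpect, Finset.mul_sum]
  refine Finset.sum_congr rfl fun xs _ => ?_
  rw [intervalIntegral.integral_const_mul, integral_circlePoissonKernel_mul_cos_int hz]
  field_simp

/-- Twice the error probability of a test that errs when `D > 0` and tosses a fair coin when
`D = 0`. -/
def tieWeight (D : ℤ) : ℝ := 1 + D.sign

lemma zpow_mul_tieWeight_add_neg (z : ℝ) (D : ℤ) :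
    z ^ D * tieWeight D + z ^ (-D) * tieWeight (-D) = 2 * z ^ D.natAbs := by
  rcases Int.lt_trichotomy D 0 with hD | rfl | hD
  · have natAbs_eq : (D.natAbs : ℤ) = -D := by lia
    rw [← zpow_natCast, natAbs_eq, tieWeight, tieWeight, Int.sign_neg,
      Int.sign_eq_neg_one_of_neg hD]
    push_cast
    ring
  · norm_num [tieWeight]
  · have natAbs_eq : (D.natAbs : ℤ) = D := by lia
    rw [← zpow_natCast, natAbs_eq, tieWeight, tieWeight, Int.sign_neg, Int.sign_eq_one_of_pos hD]
    push_cast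
    ring

section Tilt

variable {Q : Ω → ℝ} {d : Ω → ℤ} {e : Ω ≃ Ω}

lemma iidExpect_tilt_tieWeight (hQ : ∀ x, Q (e x) = Q x) (hd : ∀ x, d (e x) = -d x)
    {z : ℝ} (hz : z ≠ 0) :
    iidExpect (fun x => Q x * z ^ d x) n (fun xs => tieWeight (∑ k, d (xs k)))
      = iidExpect Q n fun xs => z ^ (∑ k, d (xs k)).natAbs := by
  rw [iidExpect_mul_zpow hz]
  have reflect := iidExpect_comp_equiv (n := n) e hQ
    fun xs => z ^ (∑ k, d (xs k)) * tieWeight (∑ k, d (xs k))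
  simp only [hd, Finset.sum_neg_distrib] at reflect
  have two_mul_eq : iidExpect Q n (fun xs => 2 * z ^ (∑ k, d (xs k)).natAbs)
      = 2 * iidExpect Q n fun xs => z ^ (∑ k, d (xs k)) * tieWeight (∑ k, d (xs k)) := by
    simp only [← zpow_mul_tieWeight_add_neg]
    rw [iidExpect_add, reflect, two_mul]
  rw [iidExpect_const_mul] at two_mul_eq
  linarith

lemma sum_mul_sin_eq_zero_of_symm (hQ : ∀ x, Q (e x) = Q x) (hd : ∀ x, d (e x) = -d x)
    (u : ℝ) : ∑ x, Q x * sin (d x * u) = 0 := by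
  have reflect := e.sum_comp fun x => Q x * sin (d x * u)
  simp only [hQ, hd, Int.cast_neg, neg_mul, sin_neg, mul_neg, Finset.sum_neg_distrib] at reflect
  linarith

theorem iidExpect_tilt_tieWeight_eq_integral (hQ : ∀ x, Q (e x) = Q x)
    (hd : ∀ x, d (e x) = -d x) {z : ℝ} (hz₀ : z ≠ 0) (hz : |z| < 1) :
    iidExpect (fun x => Q x * z ^ d x) n (fun xs => tieWeight (∑ k, d (xs k)))
      = (2 * π)⁻¹ * ∫ u in -π..π, (∑ x, Q x * cos (d x * u)) ^ n * circlePoissonKernel z u := by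
  rw [iidExpect_tilt_tieWeight hQ hd hz₀,
    iidExpect_pow_natAbs_sum hz (sum_mul_sin_eq_zero_of_symm hQ hd)]

end Tilt

end IidExpectation

section AgreementGap

variable {p n : ℕ}

/-- How much more often the pair `{i, j}` agrees than the pair `{k, l}` in the sample `x`. -/
def agreementGap (i j k l : Fin p) (x : Fin p → Bool) : ℤ :=
  (if x i = x j then 1 else 0) - (if x k = x l then 1 else 0)

lemma Ahat_sub_Ahat (xs : Fin n → Fin p → Bool) (i j k l : Fin p) :
    Ahat xs i j - Ahat xs k l = ((∑ m, agreementGap i j k l (xs m) : ℤ) : ℝ) / n := by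
  simp [Ahat, agreementGap, sub_div]

lemma Ahat_lt_Ahat_iff (hn : n ≠ 0) (xs : Fin n → Fin p → Bool) (i j k l : Fin p) :
    Ahat xs k l < Ahat xs i j ↔ 0 < ∑ m, agreementGap i j k l (xs m) := by
  rw [← sub_pos, Ahat_sub_Ahat, div_pos_iff_of_pos_right (by positivity), Int.cast_pos]

lemma Ahat_eq_Ahat_iff (hn : n ≠ 0) (xs : Fin n → Fin p → Bool) (i j k l : Fin p) :
    Ahat xs k l = Ahat xs i j ↔ ∑ m, agreementGap i j k l (xs m) = 0 := by
  rw [eq_comm, ← sub_eq_zero, Ahat_sub_Ahat, div_eq_zero_iff, Int.cast_eq_zero]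
  simp [hn]

/-- The action on configurations of exchanging the nodes `i` and `j`. -/
def nodeSwap (i j : Fin p) : (Fin p → Bool) ≃ (Fin p → Bool) :=
  (Equiv.swap i j).arrowCongr (Equiv.refl Bool)

lemma nodeSwap_apply (i j : Fin p) (x : Fin p → Bool) (k : Fin p) :
    nodeSwap i j x k = x (Equiv.swap i j k) := rfl

end AgreementGap

section Chain

lemma agreementGap_nodeSwap_one_two (x : Fin 3 → Bool) :
    agreementGap 0 2 0 1 (nodeSwap 1 2 x) = -agreementGap 0 2 0 1 x := by
  have swap_zero : Equiv.swap (1 : Fin 3) 2 0 = 0 := by decide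
  simp [agreementGap, nodeSwap_apply, swap_zero]

lemma agreementGap_nodeSwap_zero_two (x : Fin 3 → Bool) :
    agreementGap 0 2 0 1 (nodeSwap 0 2 x) = agreementGap 0 2 1 2 x := by
  have swap_one : Equiv.swap (0 : Fin 3) 2 1 = 1 := by decide
  simp [agreementGap, nodeSwap_apply, swap_one, eq_comm]

lemma edgeFinset_chainA : chainA.edgeFinset = {s(0, 1), s(1, 2)} := by
  ext e
  rw [SimpleGraph.mem_edgeFinset]
  simp only [chainA, SimpleGraph.edgeSet_fromEdgeSet, Set.mem_sdiff, Set.mem_insert_iff,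
    Set.mem_singleton_iff, Finset.mem_insert, Finset.mem_singleton]
  refine ⟨And.left, fun he => ⟨he, ?_⟩⟩
  rcases he with rfl | rfl <;> simp

lemma isingP_chainA (θ : ℝ) (x : Fin 3 → Bool) :
    isingP θ chainA x = 1 / 2 *
      ((if x 0 = x 1 then 1 - θ else θ) * (if x 1 = x 2 then 1 - θ else θ)) := by
  rw [isingP, edgeFinset_chainA, Finset.prod_pair (by decide)]
  simp [pairWeight]

lemma isingP_chainA_nonneg {θ : ℝ} (hθ₀ : 0 ≤ θ) (hθ₁ : θ ≤ 1) (x : Fin 3 → Bool) :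
    0 ≤ isingP θ chainA x := by
  have := sub_nonneg.2 hθ₁
  rw [isingP_chainA]
  positivity

lemma isingP_chainA_nodeSwap_zero_two (θ : ℝ) (x : Fin 3 → Bool) :
    isingP θ chainA (nodeSwap 0 2 x) = isingP θ chainA x := by
  have swap_one : Equiv.swap (0 : Fin 3) 2 1 = 1 := by decide
  simp only [isingP_chainA, nodeSwap_apply, swap_one, Equiv.swap_apply_left,
    Equiv.swap_apply_right, eq_comm, mul_comm]

lemma sum_fin_three_arrow {α M : Type*} [Fintype α] [AddCommMonoid M] (F : (Fin 3 → α) → M) :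
    ∑ x, F x = ∑ a, ∑ b, ∑ c, F ![a, b, c] := by
  let cons : α × α × α ≃ (Fin 3 → α) :=
    { toFun := fun q => ![q.1, q.2.1, q.2.2]
      invFun := fun x => (x 0, x 1, x 2)
      left_inv := fun q => by simp
      right_inv := fun x => by ext i; fin_cases i <;> simp }
  rw [← cons.sum_comp]
  simp only [Fintype.sum_prod_type]
  rfl

/-- The probability that the estimator misses the chain, given the excesses `a` and `b` of the
agreement count of the absent edge `{1, 3}` over those of the edges `{1, 2}` and `{2, 3}`. -/
noncomputable def chainErrorGivenGaps (a b : ℤ) : ℝ :=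
  if 0 < a ∨ 0 < b then 1 else if a = 0 ∧ b = 0 then 2 / 3 else if a = 0 ∨ b = 0 then 1 / 2 else 0

lemma abs_chainErrorGivenGaps_sub_le (a b : ℤ) :
    |chainErrorGivenGaps a b - (1 / 2 * tieWeight a + 1 / 2 * tieWeight b)|
      ≤ if 0 ≤ a ∧ 0 ≤ b then 1 else 0 := by
  rcases Int.lt_trichotomy a 0 with ha | rfl | ha <;>
    rcases Int.lt_trichotomy b 0 with hb | rfl | hb <;>
    norm_num [chainErrorGivenGaps, tieWeight, Int.sign_eq_neg_one_of_neg,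
      Int.sign_eq_one_of_pos, *, le_of_lt, not_lt_of_gt, not_le_of_gt, ne_of_lt, ne_of_gt]

variable {θ : ℝ} {n : ℕ}

lemma mul_chainErrorGivenGaps (w : ℝ) (a b : ℤ) :
    w * chainErrorGivenGaps a b = (if 0 < a ∨ 0 < b then w else 0)
      + 1 / 2 * (if 0 < a - b ∧ a = 0 then w else 0)
      + 1 / 2 * (if 0 < b - a ∧ b = 0 then w else 0)
      + 2 / 3 * (if a - b = 0 ∧ b = 0 then w else 0) := by
  rcases Int.lt_trichotomy a 0 with ha | rfl | ha <;>
    rcases Int.lt_trichotomy b 0 with hb | rfl | hb <;>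
    simp (disch := lia) only [chainErrorGivenGaps, if_pos, if_neg] <;> ring

lemma ErrProb_eq_iidExpect (θ : ℝ) (hn : n ≠ 0) :
    ErrProb θ n = iidExpect (isingP θ chainA) n fun xs => chainErrorGivenGaps
      (∑ k, agreementGap 0 2 0 1 (xs k)) (∑ k, agreementGap 0 2 1 2 (xs k)) := by
  simp only [ErrProb, iidProb, iidExpect, Finset.mul_sum, ← Finset.sum_add_distrib]
  refine Finset.sum_congr rfl fun xs _ => ?_
  have gap_edges (i j k l : Fin 3) : ∑ m, agreementGap i j k l (xs m)
      = ∑ m, agreementGap 0 2 k l (xs m) - ∑ m, agreementGap 0 2 i j (xs m) := by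
    simp [agreementGap]
  simp only [Set.mem_ofPred_eq, Ahat_lt_Ahat_iff hn, Ahat_eq_Ahat_iff hn, gap_edges 1 2 0 1,
    gap_edges 0 1 1 2, mul_chainErrorGivenGaps]

lemma abs_ErrProb_sub_tieWeight_le (hθ₀ : 0 ≤ θ) (hθ₁ : θ ≤ 1) (hn : n ≠ 0) :
    |ErrProb θ n - iidExpect (isingP θ chainA) n
        fun xs => tieWeight (∑ k, agreementGap 0 2 0 1 (xs k))|
      ≤ iidExpect (isingP θ chainA) n fun xs =>
          if 0 ≤ ∑ k, agreementGap 0 2 0 1 (xs k) ∧ 0 ≤ ∑ k, agreementGap 0 2 1 2 (xs k)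
          then 1 else 0 := by
  have reflect := iidExpect_comp_equiv (n := n) (nodeSwap 0 2) (isingP_chainA_nodeSwap_zero_two θ)
    fun xs => tieWeight (∑ k, agreementGap 0 2 0 1 (xs k))
  simp only [agreementGap_nodeSwap_zero_two] at reflect
  have symmetrized : iidExpect (isingP θ chainA) n
        (fun xs => tieWeight (∑ k, agreementGap 0 2 0 1 (xs k)))
      = iidExpect (isingP θ chainA) n fun xs => 1 / 2 * tieWeight (∑ k, agreementGap 0 2 0 1 (xs k))
          + 1 / 2 * tieWeight (∑ k, agreementGap 0 2 1 2 (xs k)) := by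
    rw [iidExpect_add, iidExpect_const_mul, iidExpect_const_mul, reflect]
    ring
  rw [ErrProb_eq_iidExpect θ hn, symmetrized]
  exact abs_iidExpect_sub_le (isingP_chainA_nonneg hθ₀ hθ₁) fun xs =>
    abs_chainErrorGivenGaps_sub_le _ _

variable {z : ℝ}

/-- The exponential tilt of the chain distribution by the gap between the pairs `{1, 3}` and
`{1, 2}`. If `z² (1 - θ) = θ`, exchanging the nodes `2` and `3` preserves it. -/
noncomputable def tiltedChain (θ z : ℝ) (x : Fin 3 → Bool) : ℝ :=
  isingP θ chainA x * z ^ (-agreementGap 0 2 0 1 x)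

lemma isingP_chainA_eq_tiltedChain_mul (hz : z ≠ 0) (x : Fin 3 → Bool) :
    isingP θ chainA x = tiltedChain θ z x * z ^ agreementGap 0 2 0 1 x := by
  rw [tiltedChain, mul_assoc, ← zpow_add₀ hz, neg_add_cancel, zpow_zero, mul_one]

lemma sq_mul_inv_of_sq_mul_one_sub (hz : z ≠ 0) (hzθ : z ^ 2 * (1 - θ) = θ) :
    θ ^ 2 * z⁻¹ = θ * (1 - θ) * z := by
  field_simp
  linear_combination (-θ) * hzθ

lemma tiltedChain_nodeSwap_one_two (hz : z ≠ 0) (hzθ : z ^ 2 * (1 - θ) = θ) (x : Fin 3 → Bool) :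
    tiltedChain θ z (nodeSwap 1 2 x) = tiltedChain θ z x := by
  have swap_zero : Equiv.swap (1 : Fin 3) 2 0 = 0 := by decide
  have tilt_eq := sq_mul_inv_of_sq_mul_one_sub hz hzθ
  simp only [tiltedChain, isingP_chainA, nodeSwap_apply,
    swap_zero, Equiv.swap_apply_left, Equiv.swap_apply_right, agreementGap]
  cases h0 : x 0 <;> cases h1 : x 1 <;> cases h2 : x 2 <;> simp <;> linarith

lemma sum_tiltedChain_mul_cos (hz : z ≠ 0) (hzθ : z ^ 2 * (1 - θ) = θ) (u : ℝ) :
    ∑ x, tiltedChain θ z x * cos (agreementGap 0 2 0 1 x * u)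
      = (1 - θ) + 2 * θ * (1 - θ) * z * cos u := by
  have tilt_eq := sq_mul_inv_of_sq_mul_one_sub hz hzθ
  rw [sum_fin_three_arrow]
  simp only [Fintype.sum_bool, tiltedChain, isingP_chainA, agreementGap, Matrix.cons_val_zero,
    Matrix.cons_val_one, Matrix.cons_val, reduceCtorEq, ↓reduceIte, sub_self, sub_zero, zero_sub,
    neg_zero, neg_neg, zpow_zero, zpow_one, zpow_neg_one, Int.cast_zero, Int.cast_one,
    Int.cast_neg, zero_mul, neg_mul, one_mul, cos_zero, cos_neg]
  linear_combination cos u * tilt_eq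

lemma sum_isingP_chainA_mul_zpow (hz : z ≠ 0) (hzθ : z ^ 2 * (1 - θ) = θ) (y : ℝ) :
    ∑ x, isingP θ chainA x * (z⁻¹ ^ agreementGap 0 2 0 1 x * y ^ agreementGap 0 2 1 2 x)
      = (1 - θ) ^ 2 + θ * (1 - θ) * (z + y⁻¹ + z * y) := by
  have tilt_eq := sq_mul_inv_of_sq_mul_one_sub hz hzθ
  rw [sum_fin_three_arrow]
  simp only [Fintype.sum_bool, isingP_chainA, agreementGap, Matrix.cons_val_zero,
    Matrix.cons_val_one, Matrix.cons_val, reduceCtorEq, ↓reduceIte, sub_self, sub_zero, zero_sub,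
    zpow_zero, zpow_one, zpow_neg_one, inv_inv]
  linear_combination y * tilt_eq

lemma iidExpect_isingP_chainA_tieWeight (hz₀ : 0 < z) (hz₁ : z < 1)
    (hzθ : z ^ 2 * (1 - θ) = θ) :
    iidExpect (isingP θ chainA) n (fun xs => tieWeight (∑ k, agreementGap 0 2 0 1 (xs k)))
      = (2 * π)⁻¹ * ∫ u in -π..π,
          ((1 - θ) + 2 * θ * (1 - θ) * z * cos u) ^ n * circlePoissonKernel z u := by
  rw [funext (isingP_chainA_eq_tiltedChain_mul hz₀.ne'),
    iidExpect_tilt_tieWeight_eq_integral (tiltedChain_nodeSwap_one_two hz₀.ne' hzθ)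
      agreementGap_nodeSwap_one_two hz₀.ne' ((abs_of_pos hz₀).trans_lt hz₁)]
  simp only [sum_tiltedChain_mul_cos hz₀.ne' hzθ]

theorem abs_ErrProb_sub_integral_le (hθ₀ : 0 ≤ θ) (hθ₁ : θ ≤ 1) (hz₀ : 0 < z) (hz₁ : z < 1)
    (hzθ : z ^ 2 * (1 - θ) = θ) {y : ℝ} (hy : 1 ≤ y) (hn : n ≠ 0) :
    |ErrProb θ n - (2 * π)⁻¹ * ∫ u in -π..π,
        ((1 - θ) + 2 * θ * (1 - θ) * z * cos u) ^ n * circlePoissonKernel z u|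
      ≤ ((1 - θ) ^ 2 + θ * (1 - θ) * (z + y⁻¹ + z * y)) ^ n := by
  rw [← iidExpect_isingP_chainA_tieWeight hz₀ hz₁ hzθ,
    ← sum_isingP_chainA_mul_zpow hz₀.ne' hzθ]
  exact (abs_ErrProb_sub_tieWeight_le hθ₀ hθ₁ hn).trans <|
    iidExpect_indicator_nonneg_le_pow (isingP_chainA_nonneg hθ₀ hθ₁) _ _
      ((one_le_inv₀ hz₀).2 hz₁.le) hy

end Chain

section Parameters

variable {θ : ℝ}

lemma zTheta_pos (hθ₀ : 0 < θ) (hθ₁ : θ < 1) : 0 < zTheta θ :=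
  sqrt_pos.2 (div_pos hθ₀ (sub_pos.2 hθ₁))

lemma zTheta_lt_one (hθ : θ < 1 / 2) : zTheta θ < 1 := by
  rw [zTheta, sqrt_lt' one_pos, div_lt_iff₀] <;> linarith

lemma zTheta_sq_mul (hθ₀ : 0 ≤ θ) (hθ₁ : θ < 1) : zTheta θ ^ 2 * (1 - θ) = θ := by
  have hθ : 0 < 1 - θ := sub_pos.2 hθ₁
  rw [zTheta, sq_sqrt (by positivity), div_mul_cancel₀ _ hθ.ne']

lemma sqrt_four_mul_mul_one_sub (hθ₀ : 0 ≤ θ) (hθ₁ : θ < 1) :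
    √(4 * θ * (1 - θ)) = 2 * (1 - θ) * zTheta θ := by
  have : 0 < 1 - θ := sub_pos.2 hθ₁
  have hz : 0 ≤ zTheta θ := sqrt_nonneg _
  rw [sqrt_eq_iff_mul_self_eq (by positivity) (by positivity)]
  linear_combination (-(4 * (1 - θ))) * zTheta_sq_mul hθ₀ hθ₁

lemma exp_neg_Kexp (hθ₀ : 0 ≤ θ) (hθ₁ : θ < 1) :
    exp (-Kexp θ) = (1 - θ) + 2 * θ * (1 - θ) * zTheta θ := by
  have : 0 < 1 - θ := sub_pos.2 hθ₁
  have hz : 0 ≤ zTheta θ := sqrt_nonneg _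
  have base_eq : 1 - θ * (1 - √(4 * θ * (1 - θ))) = (1 - θ) + 2 * θ * (1 - θ) * zTheta θ := by
    rw [sqrt_four_mul_mul_one_sub hθ₀ hθ₁]
    ring
  rw [Kexp, neg_neg, base_eq, exp_log (by positivity)]

lemma sigmaSq_mul_exp_neg_Kexp (hθ₀ : 0 ≤ θ) (hθ₁ : θ < 1) :
    sigmaSq θ * exp (-Kexp θ) = 2 * θ * (1 - θ) * zTheta θ := by
  rw [sigmaSq, mul_assoc, ← exp_add, add_neg_cancel, exp_zero, sqrt_four_mul_mul_one_sub hθ₀ hθ₁]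
  ring

lemma sigmaSq_pos (hθ₀ : 0 < θ) (hθ₁ : θ < 1) : 0 < sigmaSq θ := by
  have : 0 < 1 - θ := sub_pos.2 hθ₁
  unfold sigmaSq
  positivity

lemma sigmaSq_lt_one (hθ₀ : 0 ≤ θ) (hθ₁ : θ < 1) : sigmaSq θ < 1 := by
  have lt_exp : sigmaSq θ * exp (-Kexp θ) < 1 * exp (-Kexp θ) := by
    rw [sigmaSq_mul_exp_neg_Kexp hθ₀ hθ₁, exp_neg_Kexp hθ₀ hθ₁]
    linarith
  exact lt_of_mul_lt_mul_right lt_exp (exp_pos _).le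

lemma one_sub_add_mul_cos_eq_exp_mul (hθ₀ : 0 ≤ θ) (hθ₁ : θ < 1) (u : ℝ) :
    (1 - θ) + 2 * θ * (1 - θ) * zTheta θ * cos u
      = exp (-Kexp θ) * (1 - sigmaSq θ * (1 - cos u)) := by
  linear_combination (1 - cos u) * sigmaSq_mul_exp_neg_Kexp hθ₀ hθ₁ - exp_neg_Kexp hθ₀ hθ₁

lemma exists_two_gap_rate_lt_exp_neg_Kexp (hθ₀ : 0 < θ) (hθ₁ : θ < 1 / 2) :
    ∃ y, 1 ≤ y ∧
      (1 - θ) ^ 2 + θ * (1 - θ) * (zTheta θ + y⁻¹ + zTheta θ * y) < exp (-Kexp θ) := by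
  have : 0 < 1 - θ := by linarith
  have hz₀ : 0 < zTheta θ := zTheta_pos hθ₀ (by linarith)
  have hz₁ : zTheta θ < 1 := zTheta_lt_one hθ₁
  refine ⟨2 / (1 + zTheta θ), (one_le_div (by positivity)).2 (by linarith), ?_⟩
  rw [exp_neg_Kexp hθ₀.le (by linarith), ← sub_pos]
  generalize zTheta θ = z at hz₀ hz₁ ⊢
  have gain_eq : (1 - θ) + 2 * θ * (1 - θ) * z
      - ((1 - θ) ^ 2 + θ * (1 - θ) * (z + (2 / (1 + z))⁻¹ + z * (2 / (1 + z))))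
      = θ * (1 - θ) * ((1 - z) ^ 2 / (2 * (1 + z))) := by
    field_simp
    ring
  have : 0 < 1 - z := sub_pos.2 hz₁
  rw [gain_eq]
  positivity

end Parameters

section Assembly

variable {θ s z : ℝ}

lemma tendsto_sqrt_mul_integral_circlePoissonKernel (hs₀ : 0 < s) (hs₁ : s < 1) (hz : |z| < 1) :
    Tendsto (fun n : ℕ => (n : ℝ) * (√(2 * π * s * n) * ((2 * π)⁻¹ *
        ∫ u in -π..π, (1 - s * (1 - cos u)) ^ n * circlePoissonKernel z u) - (1 + z) / (1 - z)))
      atTop (𝓝 ((1 + z) / (1 - z) * ((1 - 3 * s) / (8 * s) - z / ((1 - z) ^ 2 * s)))) := by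
  have normalization_eq : √(2 * π * s) * (2 * π)⁻¹ * √(π / (s / 2)) = 1 := by
    rw [mul_right_comm, ← sqrt_mul (by positivity),
      show 2 * π * s * (π / (s / 2)) = (2 * π) ^ 2 by field_simp, sqrt_sq (by positivity),
      mul_inv_cancel₀ (by positivity)]
  have rate_pos : 0 < min s (1 - s) * (2 / π ^ 2) :=
    mul_pos (lt_min hs₀ (sub_pos.2 hs₁)) (by positivity)
  have hlaplace := tendsto_laplace_integral (φ := fun u => 1 - s * (1 - cos u)) (by fun_prop)
    (continuous_circlePoissonKernel hz) pi_pos (half_pos hs₀) rate_pos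
    (fun u hu => abs_one_sub_mul_one_sub_cos_le_exp hs₀.le hs₁.le (abs_le.2 hu))
    (one_sub_mul_one_sub_cos_sub_exp_isLittleO s) (circlePoissonKernel_sub_quadratic_isLittleO hz)
  convert hlaplace.const_mul (√(2 * π * s) * (2 * π)⁻¹) using 2 with n
  · rw [sqrt_mul (by positivity)]
    linear_combination n * ((1 + z) / (1 - z)) * normalization_eq
  · have : 1 - z ≠ 0 := sub_ne_zero.2 (abs_lt.1 hz).2.ne'
    rw [← mul_assoc, normalization_eq, one_mul]
    field_simp
    ring

lemma exists_abs_exp_mul_ErrProb_sub_integral_le (hθ₀ : 0 < θ) (hθ₁ : θ < 1 / 2) :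
    ∃ r, 0 ≤ r ∧ r < 1 ∧ ∀ n : ℕ, n ≠ 0 → |exp (n * Kexp θ) * ErrProb θ n - (2 * π)⁻¹ *
      ∫ u in -π..π, (1 - sigmaSq θ * (1 - cos u)) ^ n * circlePoissonKernel (zTheta θ) u|
      ≤ r ^ n := by
  have hθ₁' : θ < 1 := by linarith
  have : 0 < 1 - θ := sub_pos.2 hθ₁'
  have hz₀ := zTheta_pos hθ₀ hθ₁'
  obtain ⟨y, hy, rate_lt⟩ := exists_two_gap_rate_lt_exp_neg_Kexp hθ₀ hθ₁
  refine ⟨exp (Kexp θ) * ((1 - θ) ^ 2 + θ * (1 - θ) * (zTheta θ + y⁻¹ + zTheta θ * y)),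
    by positivity, ?_, fun n hn => ?_⟩
  · exact (mul_lt_mul_of_pos_left rate_lt (exp_pos _)).trans_eq
      (by rw [← exp_add, add_neg_cancel, exp_zero])
  have bound := abs_ErrProb_sub_integral_le hθ₀.le hθ₁'.le hz₀ (zTheta_lt_one hθ₁)
    (zTheta_sq_mul hθ₀.le hθ₁') hy hn
  simp only [one_sub_add_mul_cos_eq_exp_mul hθ₀.le hθ₁', mul_pow _ _ n,
    mul_assoc _ _ (circlePoissonKernel _ _), intervalIntegral.integral_const_mul] at bound
  have cancel : exp (Kexp θ) ^ n * exp (-Kexp θ) ^ n = 1 := by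
    rw [← mul_pow, ← exp_add, add_neg_cancel, exp_zero, one_pow]
  rw [exp_nat_mul, mul_pow]
  set I := ∫ u in -π..π, (1 - sigmaSq θ * (1 - cos u)) ^ n * circlePoissonKernel (zTheta θ) u
  calc |exp (Kexp θ) ^ n * ErrProb θ n - (2 * π)⁻¹ * I|
      = |exp (Kexp θ) ^ n * (ErrProb θ n - (2 * π)⁻¹ * (exp (-Kexp θ) ^ n * I))| := by
        congr 1
        linear_combination (2 * π)⁻¹ * I * cancel
    _ = exp (Kexp θ) ^ n * |ErrProb θ n - (2 * π)⁻¹ * (exp (-Kexp θ) ^ n * I)| := by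
        rw [abs_mul, abs_of_pos (by positivity)]
    _ ≤ _ := by gcongr

lemma tendsto_mul_sqrt_mul_pow {r : ℝ} (hr₀ : 0 ≤ r) (hr₁ : r < 1) (c : ℝ) :
    Tendsto (fun n : ℕ => (n : ℝ) * (√(c * n) * r ^ n)) atTop (𝓝 0) := by
  have hsq := (tendsto_pow_const_mul_const_pow_of_abs_lt_one 2
    ((abs_of_nonneg hr₀).trans_lt hr₁)).const_mul √c
  rw [mul_zero] at hsq
  refine squeeze_zero (fun n => by positivity) (fun n => ?_) hsq
  have sqrt_le : √(n : ℝ) ≤ n := by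
    rw [sqrt_le_left (by positivity)]
    exact_mod_cast Nat.le_self_pow two_ne_zero n
  calc (n : ℝ) * (√(c * n) * r ^ n) = √c * (n * √n * r ^ n) := by
        rw [sqrt_mul' _ n.cast_nonneg]
        ring
    _ ≤ √c * ((n : ℝ) ^ 2 * r ^ n) := by
        rw [sq]
        gcongr

lemma tendsto_ErrProb_normalized (hθ₀ : 0 < θ) (hθ₁ : θ < 1 / 2) :
    Tendsto (fun n : ℕ => (n : ℝ) * (√(2 * π * sigmaSq θ * n) * exp (n * Kexp θ) * ErrProb θ n
        - (1 + zTheta θ) / (1 - zTheta θ))) atTop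
      (𝓝 ((1 + zTheta θ) / (1 - zTheta θ) * ((1 - 3 * sigmaSq θ) / (8 * sigmaSq θ)
        - zTheta θ / ((1 - zTheta θ) ^ 2 * sigmaSq θ)))) := by
  have hθ₁' : θ < 1 := by linarith
  have hz : |zTheta θ| < 1 :=
    (abs_of_pos (zTheta_pos hθ₀ hθ₁')).trans_lt (zTheta_lt_one hθ₁)
  have hmain := tendsto_sqrt_mul_integral_circlePoissonKernel (sigmaSq_pos hθ₀ hθ₁')
    (sigmaSq_lt_one hθ₀.le hθ₁') hz
  obtain ⟨r, hr₀, hr₁, hr⟩ := exists_abs_exp_mul_ErrProb_sub_integral_le hθ₀ hθ₁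
  have hremainder : Tendsto (fun n : ℕ => (n : ℝ) * (√(2 * π * sigmaSq θ * n) *
      (exp (n * Kexp θ) * ErrProb θ n - (2 * π)⁻¹ * ∫ u in -π..π,
        (1 - sigmaSq θ * (1 - cos u)) ^ n * circlePoissonKernel (zTheta θ) u))) atTop (𝓝 0) := by
    refine squeeze_zero_norm' ?_ (tendsto_mul_sqrt_mul_pow hr₀ hr₁ (2 * π * sigmaSq θ))
    filter_upwards [eventually_ne_atTop 0] with n hn
    rw [norm_mul, norm_mul, norm_natCast, norm_of_nonneg (sqrt_nonneg _)]
    gcongr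
    exact hr n hn
  simpa only [add_zero] using (hmain.add hremainder).congr fun n => by ring

lemma two_mul_fn_sub_ftilde (hz : zTheta θ ≠ 1) (n : ℕ) :
    2 * fn θ n - ftilde θ n = exp (-n * Kexp θ) / √(2 * π * sigmaSq θ * n)
      * ((1 + zTheta θ) / (1 - zTheta θ) * ((1 + (1 - 3 * sigmaSq θ) / (8 * sigmaSq θ) / n)
        * (1 - zTheta θ / ((1 - zTheta θ) ^ 2 * sigmaSq θ) / n))) := by
  have : 1 - zTheta θ ≠ 0 := sub_ne_zero.2 hz.symm
  simp only [fn, ftilde, ← div_div]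
  field_simp
  ring

lemma tendsto_mul_one_add_div_mul_one_sub_div (c γ δ : ℝ) :
    Tendsto (fun n : ℕ => (n : ℝ) * (c * ((1 + γ / n) * (1 - δ / n)) - c)) atTop
      (𝓝 (c * (γ - δ))) := by
  have hlim : Tendsto (fun n : ℕ => c * (γ - δ - γ * δ / n)) atTop (𝓝 (c * (γ - δ - 0))) :=
    ((tendsto_const_div_atTop_nhds_zero_nat _).const_sub _).const_mul c
  rw [sub_zero] at hlim
  refine hlim.congr' ?_
  filter_upwards [eventually_ne_atTop 0] with n hn
  field_simp
  ring

lemma tendsto_two_mul_fn_sub_ftilde_normalized (hθ₀ : 0 < θ) (hθ₁ : θ < 1 / 2) :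
    Tendsto (fun n : ℕ => (n : ℝ) * (√(2 * π * sigmaSq θ * n) * exp (n * Kexp θ)
        * (2 * fn θ n - ftilde θ n) - (1 + zTheta θ) / (1 - zTheta θ))) atTop
      (𝓝 ((1 + zTheta θ) / (1 - zTheta θ) * ((1 - 3 * sigmaSq θ) / (8 * sigmaSq θ)
        - zTheta θ / ((1 - zTheta θ) ^ 2 * sigmaSq θ)))) := by
  refine (tendsto_mul_one_add_div_mul_one_sub_div _ _ _).congr' ?_
  filter_upwards [eventually_ne_atTop 0] with n hn
  have hσ := sigmaSq_pos hθ₀ (by linarith)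
  have hsqrt : √(2 * π * sigmaSq θ * n) ≠ 0 := by positivity
  have cancel : √(2 * π * sigmaSq θ * n) * exp (n * Kexp θ)
      * (exp (-n * Kexp θ) / √(2 * π * sigmaSq θ * n)) = 1 := by
    rw [neg_mul, exp_neg]
    field_simp
  rw [two_mul_fn_sub_ftilde (zTheta_lt_one hθ₁).ne, ← mul_assoc (_ * _), cancel, one_mul]

lemma tendsto_mul_div_sub_one {x y : ℕ → ℝ} {c l : ℝ} (hc : c ≠ 0)
    (hx : Tendsto (fun n : ℕ => (n : ℝ) * (x n - c)) atTop (𝓝 l))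
    (hy : Tendsto (fun n : ℕ => (n : ℝ) * (y n - c)) atTop (𝓝 l)) :
    Tendsto (fun n : ℕ => (n : ℝ) * (x n / y n - 1)) atTop (𝓝 0) := by
  have hyc : Tendsto y atTop (𝓝 c) := by
    have hsub := (hy.mul tendsto_inv_atTop_nhds_zero_nat).add_const c
    rw [mul_zero, zero_add] at hsub
    refine hsub.congr' ?_
    filter_upwards [eventually_ne_atTop 0] with n hn
    field_simp
    ring
  have hquot := (hx.sub hy).div hyc hc
  rw [sub_self, zero_div] at hquot
  refine hquot.congr' ?_
  filter_upwards [hyc.eventually_ne hc] with n hyn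
  simp only [Pi.div_apply]
  field_simp
  ring

end Assembly

/-- exact asymptotics of the error probability of the tie-breaking MWST
estimator for the 3-node chain: `Err_n = (2f(n) - f̃(n))(1 + o(n⁻¹))`. -/
theorem stmt11 (θ : ℝ) (hθ0 : 0 < θ) (hθ1 : θ < 1 / 2) :
    Filter.Tendsto (fun n : ℕ =>
      (n : ℝ) * (ErrProb θ n / (2 * fn θ n - ftilde θ n) - 1))
      Filter.atTop (nhds 0) := by
  have leading_ne_zero : (1 + zTheta θ) / (1 - zTheta θ) ≠ 0 :=
    (div_pos (by linarith [zTheta_pos hθ0 (by linarith)])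
      (sub_pos.2 (zTheta_lt_one hθ1))).ne'
  have ratio_tendsto := tendsto_mul_div_sub_one leading_ne_zero
    (tendsto_ErrProb_normalized hθ0 hθ1) (tendsto_two_mul_fn_sub_ftilde_normalized hθ0 hθ1)
  refine ratio_tendsto.congr' ?_
  filter_upwards [eventually_ne_atTop 0] with n hn
  have normalization_ne_zero : √(2 * π * sigmaSq θ * n) * exp (n * Kexp θ) ≠ 0 := by
    have := sigmaSq_pos hθ0 (by linarith)
    positivity
  rw [mul_div_mul_left _ _ normalization_ne_zero]
end

section
/- Let θ ∈ (0, 1/2), let P = P_{T,θ} on {0,1}⁴ for the path tree T with edge set {{1,2},{2,3},{3,4}}, and let x_1,…,x_n be i.i.d. samples from P. Then lim_{n→∞} −(1/n)·log ℙ(Â_{1,4} ≥ Â_{1,2}) = −log(1 − 2θ(1−θ)·(1 − √(4θ(1−θ)))), and this value is strictly greater than K(θ) := −log(1 − θ·(1 − √(4θ(1−θ)))); hence the event {Â_{1,4} ≥ Â_{1,2}} is not a dominant error event. -/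
open scoped Classical BigOperators
open Filter

/-!
Put `D = 1{x₁ ≠ x₂} + 1{x₁ = x₄} ∈ {0, 1, 2}`; the event says that the `n` samples of `D` sum to at
least `n`. Let `G` be the generating function of `D`, with `b = G₀` and `a = G₂`, so `a ≤ b`.
At `t = √(b / a) ≥ 1` the tilted polynomial `G(tX)` is palindromic. Chernoff's bound at `t` gives
`ℙ ≤ (G(t) / t)ⁿ`. Conversely, the middle coefficient of the square of a palindromic polynomial is
the sum of the squares of its coefficients, so by Cauchy–Schwarz applied to `G(tX)ᵐ` the
probability that `2m` samples sum to exactly `2m` is at least `(G(t) / t)²ᵐ / (2m + 1)`. Hence the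
exponent is `-log (G(t) / t) = -log (1 - (√b - √a)²)`.
-/

section Palindromic

open Polynomial

/-- `p` is palindromic of formal degree `N`, i.e. `p = X ^ N * p (1 / X)`. The degree is explicit
because the extreme coefficients may vanish; the bound on `natDegree` is needed because
`Polynomial.reflect N` fixes the coefficients of index greater than `N`. -/
structure IsPalindromic {R : Type*} [Semiring R] (N : ℕ) (p : R[X]) : Prop where
  natDegree_le : p.natDegree ≤ N
  reflect_eq : p.reflect N = p

namespace IsPalindromic

variable {R : Type*} [Semiring R] {M N : ℕ} {p q : R[X]}

lemma coeff_sub (hp : IsPalindromic N p) {i : ℕ} (hi : i ≤ N) :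
    p.coeff (N - i) = p.coeff i := by
  conv_rhs => rw [← hp.reflect_eq, coeff_reflect, revAt_le hi]

lemma one : IsPalindromic 0 (1 : R[X]) :=
  ⟨natDegree_one.le, by simp⟩

lemma mul (hp : IsPalindromic M p) (hq : IsPalindromic N q) : IsPalindromic (M + N) (p * q) where
  natDegree_le := natDegree_mul_le_of_le hp.natDegree_le hq.natDegree_le
  reflect_eq := by
    rw [reflect_mul _ _ hp.natDegree_le hq.natDegree_le, hp.reflect_eq, hq.reflect_eq]

lemma pow (hp : IsPalindromic N p) (m : ℕ) : IsPalindromic (m * N) (p ^ m) := by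
  induction m with
  | zero => simpa using one
  | succ m ih => simpa only [pow_succ, add_mul, one_mul] using ih.mul hp

lemma coeff_sq (hp : IsPalindromic N p) :
    (p ^ 2).coeff N = ∑ i ∈ Finset.range (N + 1), p.coeff i ^ 2 := by
  rw [sq, coeff_mul, Finset.Nat.sum_antidiagonal_eq_sum_range_succ_mk]
  refine Finset.sum_congr rfl fun i hi => ?_
  rw [hp.coeff_sub (Finset.mem_range_succ_iff.mp hi), sq]

lemma quadratic (u v : R) : IsPalindromic 2 (C u + C v * X + C u * X ^ 2) where
  natDegree_le := by compute_degree
  reflect_eq := by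
    have reflect_middle : reflect 2 (C v * X) = C v * X := by
      simpa [revAt_le] using reflect_C_mul_X_pow 2 1 (c := v)
    simp only [reflect_add, reflect_C, reflect_middle, reflect_C_mul_X_pow, revAt_le le_rfl,
      Nat.sub_self, pow_zero, mul_one]
    abel

lemma quadratic_comp_C_mul_X {F : Type*} [Field F] {α : F} (hα : α ≠ 0) (β v : F) :
    IsPalindromic 2 ((C (β ^ 2) + C v * X + C (α ^ 2) * X ^ 2).comp (C (β / α) * X)) := by
  have tilted_leading : α ^ 2 * (β / α) ^ 2 = β ^ 2 := by field_simp
  convert quadratic (β ^ 2) (v * (β / α)) using 1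
  nth_rw 3 [← tilted_leading]
  simp only [add_comp, mul_comp, C_comp, X_comp, pow_comp, C_mul, C_pow]
  ring

lemma sq_eval_one_le {p : ℝ[X]} (hp : IsPalindromic N p) :
    p.eval 1 ^ 2 ≤ (N + 1) * (p ^ 2).coeff N := by
  have eval_one_eq : p.eval 1 = ∑ i ∈ Finset.range (N + 1), p.coeff i := by
    simp [eval_eq_sum_range' (Nat.lt_succ_of_le hp.natDegree_le)]
  rw [eval_one_eq, hp.coeff_sq]
  simpa using sq_sum_le_card_mul_sum_sq (s := Finset.range (N + 1)) (f := p.coeff)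

lemma pow_eval_div_le_of_comp_C_mul_X {p : ℝ[X]} {t : ℝ} (ht : 0 < t) {d : ℕ}
    (hp : IsPalindromic (2 * d) (p.comp (C t * X))) (m : ℕ) :
    (p.eval t / t ^ d) ^ (2 * m) ≤ (d * (2 * m) + 1) * (p ^ (2 * m)).coeff (d * (2 * m)) := by
  have h := (hp.pow m).sq_eval_one_le
  rw [eval_pow, ← pow_mul, ← pow_mul, mul_comm m 2, show m * (2 * d) = d * (2 * m) by ring] at h
  rw [div_pow, ← pow_mul, div_le_iff₀ (pow_pos ht _), mul_assoc]
  simpa [← pow_comp] using h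

end IsPalindromic

lemma coeff_mul_coeff_le_coeff_mul {p q : ℝ[X]} (hp : ∀ i, 0 ≤ p.coeff i)
    (hq : ∀ i, 0 ≤ q.coeff i) (i j : ℕ) :
    p.coeff i * q.coeff j ≤ (p * q).coeff (i + j) := by
  rw [coeff_mul]
  exact Finset.single_le_sum (f := fun ij : ℕ × ℕ => p.coeff ij.1 * q.coeff ij.2)
    (fun ij _ => mul_nonneg (hp _) (hq _)) (a := (i, j)) (by simp)

end Palindromic

section ExponentialRate

lemma tendsto_log_add_one_div : Tendsto (fun n : ℕ => Real.log (n + 1) / n) atTop (nhds 0) := by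
  have h : Tendsto (fun x : ℝ => Real.log x / (x - 1)) atTop (nhds 0) := by
    simpa [sub_eq_add_neg] using Real.tendsto_pow_log_div_mul_add_atTop 1 (-1) 1 one_ne_zero
  simpa [Function.comp_def] using
    h.comp (tendsto_atTop_add_const_right _ 1 tendsto_natCast_atTop_atTop)

lemma tendsto_log_const_mul_add_one_div {K : ℝ} (hK : 0 < K) :
    Tendsto (fun n : ℕ => Real.log (K * (n + 1)) / n) atTop (nhds 0) := by
  have h := (tendsto_const_div_atTop_nhds_zero_nat (Real.log K)).add tendsto_log_add_one_div
  rw [add_zero] at h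
  refine h.congr fun n => ?_
  rw [Real.log_mul hK.ne' (by positivity), add_div]

lemma tendsto_neg_inv_mul_log_of_pow_le {p c : ℕ → ℝ} {M : ℝ} (hM : 0 < M) (hc : ∀ n, 0 < c n)
    (hc_log : Tendsto (fun n : ℕ => Real.log (c n) / n) atTop (nhds 0))
    (lower : ∀ n, M ^ n ≤ c n * p n) (upper : ∀ n, p n ≤ M ^ n) :
    Tendsto (fun n : ℕ => -(1 / (n : ℝ)) * Real.log (p n)) atTop (nhds (-Real.log M)) := by
  have hp (n : ℕ) : 0 < p n := pos_of_mul_pos_right ((pow_pos hM n).trans_le (lower n)) (hc n).le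
  have h := hc_log.const_add (-Real.log M)
  rw [add_zero] at h
  refine tendsto_of_tendsto_of_tendsto_of_le_of_le' tendsto_const_nhds h ?_ ?_
  all_goals
    filter_upwards [eventually_gt_atTop 0] with n hn
    have hn' : (0 : ℝ) < n := by exact_mod_cast hn
  · have log_le : Real.log (p n) ≤ n * Real.log M := by
      simpa only [Real.log_pow] using Real.log_le_log (hp n) (upper n)
    rw [neg_mul, neg_le_neg_iff, one_div_mul_eq_div, div_le_iff₀' hn']
    exact log_le
  · have le_log : n * Real.log M ≤ Real.log (c n) + Real.log (p n) := by
      rw [← Real.log_pow, ← Real.log_mul (hc n).ne' (hp n).ne']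
      exact Real.log_le_log (pow_pos hM n) (lower n)
    field_simp
    linarith

end ExponentialRate

section GenFun

open Polynomial

/-- The generating function `∑ₓ P x * X ^ f x` of a statistic `f` under a (not necessarily
normalised) weight `P` on a finite type. -/
noncomputable def genFun {α : Type*} [Fintype α] (P : α → ℝ) (f : α → ℕ) : ℝ[X] :=
  ∑ x, C (P x) * X ^ f x

variable {α : Type*} [Fintype α] {P : α → ℝ} {f : α → ℕ}

lemma coeff_genFun (k : ℕ) : (genFun P f).coeff k = ∑ x with f x = k, P x := by
  simp [genFun, coeff_X_pow, Finset.sum_filter, eq_comm]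

lemma eval_genFun (t : ℝ) : (genFun P f).eval t = ∑ x, P x * t ^ f x := by
  simp [genFun, eval_finsetSum]

lemma genFun_pow (n : ℕ) :
    genFun P f ^ n = genFun (fun xs : Fin n → α => ∏ i, P (xs i)) (fun xs => ∑ i, f (xs i)) := by
  simp only [genFun, Fintype.sum_pow, Finset.prod_mul_distrib, Finset.prod_pow_eq_pow_sum, map_prod]

lemma coeff_genFun_nonneg (hP : ∀ x, 0 ≤ P x) (k : ℕ) : 0 ≤ (genFun P f).coeff k := by
  rw [coeff_genFun]
  exact Finset.sum_nonneg fun x _ => hP x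

lemma coeff_genFun_le_sum_filter_le (hP : ∀ x, 0 ≤ P x) {N k : ℕ} (hk : N ≤ k) :
    (genFun P f).coeff k ≤ ∑ x with N ≤ f x, P x := by
  rw [coeff_genFun]
  refine Finset.sum_le_sum_of_subset_of_nonneg ?_ fun x _ _ => hP x
  exact Finset.monotone_filter_right _ fun x _ hx => hk.trans_eq hx.symm

lemma sum_filter_le_mul_pow_le_eval_genFun (hP : ∀ x, 0 ≤ P x) {t : ℝ} (ht : 1 ≤ t) (N : ℕ) :
    (∑ x with N ≤ f x, P x) * t ^ N ≤ (genFun P f).eval t := by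
  have ht0 : 0 ≤ t := zero_le_one.trans ht
  calc (∑ x with N ≤ f x, P x) * t ^ N
      ≤ ∑ x with N ≤ f x, P x * t ^ f x := by
        rw [Finset.sum_mul]
        refine Finset.sum_le_sum fun x hx => mul_le_mul_of_nonneg_left ?_ (hP x)
        exact pow_le_pow_right₀ ht (Finset.mem_filter.mp hx).2
    _ ≤ ∑ x, P x * t ^ f x := Finset.sum_le_sum_of_subset_of_nonneg (Finset.filter_subset _ _)
        fun x _ _ => mul_nonneg (hP x) (pow_nonneg ht0 _)
    _ = (genFun P f).eval t := (eval_genFun t).symm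

lemma eval_genFun_pos (hP : ∀ x, 0 ≤ P x) {t : ℝ} (ht : 1 ≤ t) {k : ℕ}
    (hcoeff : 0 < (genFun P f).coeff k) : 0 < (genFun P f).eval t := by
  have tail_pos := hcoeff.trans_le (coeff_genFun_le_sum_filter_le hP le_rfl)
  have ht0 : 0 < t := zero_lt_one.trans_le ht
  exact (mul_pos tail_pos (pow_pos ht0 k)).trans_le (sum_filter_le_mul_pow_le_eval_genFun hP ht k)

end GenFun

section IidTail

open Polynomial

variable {p : ℕ} {P : (Fin p → Bool) → ℝ} {f : (Fin p → Bool) → ℕ}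

lemma iidProb_setOf (n : ℕ) (A : (Fin n → Fin p → Bool) → Prop) [DecidablePred A] :
    iidProb P n {xs | A xs} = ∑ xs with A xs, ∏ i, P (xs i) := by
  rw [iidProb, Finset.sum_filter]
  congr!

lemma iidProb_nonneg (hP : ∀ x, 0 ≤ P x) (n : ℕ) (A : Set (Fin n → Fin p → Bool)) :
    0 ≤ iidProb P n A :=
  Finset.sum_nonneg fun xs _ => ite_nonneg (Finset.prod_nonneg fun i _ => hP (xs i)) le_rfl

lemma coeff_genFun_pow_le_iidProb (hP : ∀ x, 0 ≤ P x) {n N k : ℕ} (hk : N ≤ k) :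
    (genFun P f ^ n).coeff k ≤ iidProb P n {xs | N ≤ ∑ i, f (xs i)} := by
  rw [genFun_pow, iidProb_setOf]
  exact coeff_genFun_le_sum_filter_le (fun xs => Finset.prod_nonneg fun i _ => hP (xs i)) hk

lemma iidProb_mul_pow_le_eval_genFun_pow (hP : ∀ x, 0 ≤ P x) {t : ℝ} (ht : 1 ≤ t) (n N : ℕ) :
    iidProb P n {xs | N ≤ ∑ i, f (xs i)} * t ^ N ≤ (genFun P f).eval t ^ n := by
  rw [← eval_pow, genFun_pow, iidProb_setOf]
  exact sum_filter_le_mul_pow_le_eval_genFun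
    (fun xs => Finset.prod_nonneg fun i _ => hP (xs i)) ht N

lemma iidProb_le_pow (hP : ∀ x, 0 ≤ P x) {t : ℝ} (ht : 1 ≤ t) (d n : ℕ) :
    iidProb P n {xs | d * n ≤ ∑ i, f (xs i)} ≤ ((genFun P f).eval t / t ^ d) ^ n := by
  have ht0 : 0 < t := zero_lt_one.trans_le ht
  rw [div_pow, ← pow_mul, le_div_iff₀ (pow_pos ht0 _)]
  exact iidProb_mul_pow_le_eval_genFun_pow hP ht n (d * n)

lemma pow_two_mul_le_mul_iidProb (hP : ∀ x, 0 ≤ P x) {t : ℝ} (ht : 0 < t) {d : ℕ}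
    (hpal : IsPalindromic (2 * d) ((genFun P f).comp (C t * X))) (m : ℕ) :
    ((genFun P f).eval t / t ^ d) ^ (2 * m)
      ≤ (d * (2 * m) + 1) * iidProb P (2 * m) {xs | d * (2 * m) ≤ ∑ i, f (xs i)} := by
  refine (hpal.pow_eval_div_le_of_comp_C_mul_X ht m).trans ?_
  gcongr
  exact coeff_genFun_pow_le_iidProb hP le_rfl

/-- The sum of an odd number of samples may be unable to hit the middle `d * n` exactly, so one
sample with value `k ≥ d` is split off. -/
lemma pow_two_mul_mul_coeff_le_mul_iidProb (hP : ∀ x, 0 ≤ P x) {t : ℝ} (ht : 0 < t) {d k : ℕ}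
    (hpal : IsPalindromic (2 * d) ((genFun P f).comp (C t * X))) (hk : d ≤ k) (m : ℕ) :
    ((genFun P f).eval t / t ^ d) ^ (2 * m) * (genFun P f).coeff k
      ≤ (d * (2 * m) + 1) *
        iidProb P (2 * m + 1) {xs | d * (2 * m + 1) ≤ ∑ i, f (xs i)} := by
  have pow_coeff_nonneg (i : ℕ) : 0 ≤ (genFun P f ^ (2 * m)).coeff i := by
    rw [genFun_pow]
    exact coeff_genFun_nonneg (fun xs => Finset.prod_nonneg fun j _ => hP (xs j)) i
  have index_le : d * (2 * m + 1) ≤ d * (2 * m) + k := by rw [mul_add_one]; gcongr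
  calc ((genFun P f).eval t / t ^ d) ^ (2 * m) * (genFun P f).coeff k
      ≤ (d * (2 * m) + 1) * (genFun P f ^ (2 * m)).coeff (d * (2 * m)) * (genFun P f).coeff k :=
        mul_le_mul_of_nonneg_right (hpal.pow_eval_div_le_of_comp_C_mul_X ht m)
          (coeff_genFun_nonneg hP k)
    _ ≤ (d * (2 * m) + 1) * (genFun P f ^ (2 * m + 1)).coeff (d * (2 * m) + k) := by
        rw [mul_assoc, pow_succ]
        gcongr
        exact coeff_mul_coeff_le_coeff_mul pow_coeff_nonneg (coeff_genFun_nonneg hP) _ _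
    _ ≤ _ := by
        gcongr
        exact coeff_genFun_pow_le_iidProb hP index_le

lemma pow_le_mul_iidProb (hP : ∀ x, 0 ≤ P x) {t : ℝ} (ht : 1 ≤ t) {d k : ℕ}
    (hpal : IsPalindromic (2 * d) ((genFun P f).comp (C t * X)))
    (hk : d ≤ k) (hcoeff : 0 < (genFun P f).coeff k) (n : ℕ) :
    ((genFun P f).eval t / t ^ d) ^ n
      ≤ max 1 ((genFun P f).eval t / t ^ d / (genFun P f).coeff k) *
        ((d * n + 1) * iidProb P n {xs | d * n ≤ ∑ i, f (xs i)}) := by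
  have ht0 : 0 < t := zero_lt_one.trans_le ht
  have rate_pos := div_pos (eval_genFun_pos hP ht hcoeff) (pow_pos ht0 d)
  have prob_nonneg := iidProb_nonneg hP n {xs | d * n ≤ ∑ i, f (xs i)}
  obtain ⟨m, rfl | rfl⟩ := Nat.even_or_odd' n
  · refine le_trans ?_ (le_mul_of_one_le_left (by positivity) (le_max_left _ _))
    exact_mod_cast pow_two_mul_le_mul_iidProb hP ht0 hpal m
  · have odd_le := pow_two_mul_mul_coeff_le_mul_iidProb hP ht0 hpal hk m
    rw [← le_div_iff₀ hcoeff] at odd_le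
    calc _ ≤ _ := (pow_succ _ _).trans_le (mul_le_mul_of_nonneg_right odd_le rate_pos.le)
      _ = (genFun P f).eval t / t ^ d / (genFun P f).coeff k * ((d * (2 * m) + 1) *
          iidProb P (2 * m + 1) {xs | d * (2 * m + 1) ≤ ∑ i, f (xs i)}) := by ring
      _ ≤ _ := by
        gcongr
        · exact le_max_right _ _
        · exact_mod_cast Nat.le_succ _

theorem tendsto_neg_inv_mul_log_iidProb_of_isPalindromic (hP : ∀ x, 0 ≤ P x)
    {t : ℝ} (ht : 1 ≤ t) {d k : ℕ}
    (hpal : IsPalindromic (2 * d) ((genFun P f).comp (C t * X)))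
    (hk : d ≤ k) (hcoeff : 0 < (genFun P f).coeff k) :
    Tendsto (fun n : ℕ =>
        -(1 / (n : ℝ)) * Real.log (iidProb P n {xs | d * n ≤ ∑ i, f (xs i)}))
      atTop (nhds (-Real.log ((genFun P f).eval t / t ^ d))) := by
  have ht0 : 0 < t := zero_lt_one.trans_le ht
  set K := max 1 ((genFun P f).eval t / t ^ d / (genFun P f).coeff k) * (d + 1)
  have hK : 0 < K := by positivity
  have lower (n : ℕ) : ((genFun P f).eval t / t ^ d) ^ n
      ≤ K * (n + 1) * iidProb P n {xs | d * n ≤ ∑ i, f (xs i)} := by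
    refine (pow_le_mul_iidProb hP ht hpal hk hcoeff n).trans ?_
    have linear_le : (d * n + 1 : ℝ) ≤ (d + 1) * (n + 1) := by
      exact_mod_cast (by nlinarith : d * n + 1 ≤ (d + 1) * (n + 1))
    rw [mul_assoc, mul_assoc, ← mul_assoc (d + 1 : ℝ)]
    gcongr
    exact iidProb_nonneg hP n _
  exact tendsto_neg_inv_mul_log_of_pow_le
    (div_pos (eval_genFun_pos hP ht hcoeff) (pow_pos ht0 d)) (fun n => by positivity)
    (tendsto_log_const_mul_add_one_div hK) lower (iidProb_le_pow hP ht d)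

end IidTail

section Crossover

open Polynomial

variable {p : ℕ} {P : (Fin p → Bool) → ℝ} {i j k l : Fin p}

/-- `1 + 1{x k = x l} - 1{x i = x j}`: the per-sample increment of `Â k l - Â i j`, shifted by one
to be a natural number. -/
def crossoverStat (i j k l : Fin p) (x : Fin p → Bool) : ℕ :=
  (if x i = x j then 0 else 1) + (if x k = x l then 1 else 0)

/-- The probability under `P` that the pair `i, j` agrees while the pair `k, l` disagrees. -/
noncomputable def crossoverMass (P : (Fin p → Bool) → ℝ) (i j k l : Fin p) : ℝ :=
  ∑ x with x i = x j ∧ x k ≠ x l, P x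

lemma Ahat_le_Ahat_iff {n : ℕ} (xs : Fin n → Fin p → Bool) :
    Ahat xs i j ≤ Ahat xs k l ↔ n ≤ ∑ m, crossoverStat i j k l (xs m) := by
  have sum_stat : ∑ m, crossoverStat i j k l (xs m)
      = (Finset.univ.filter fun m => ¬ xs m i = xs m j).card
        + (Finset.univ.filter fun m => xs m k = xs m l).card := by
    simp only [crossoverStat, Finset.sum_add_distrib, Finset.card_filter, ite_not]
  have card_add_card := Finset.card_filter_add_card_filter_not (s := Finset.univ)
    fun m => xs m i = xs m j
  rw [Finset.card_univ, Fintype.card_fin] at card_add_card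
  obtain rfl | hn := n.eq_zero_or_pos
  · simp [Ahat]
  · rw [Ahat, Ahat, div_le_div_iff_of_pos_right (by exact_mod_cast hn), Nat.cast_le, sum_stat]
    omega

lemma genFun_crossoverStat :
    genFun P (crossoverStat i j k l) = C (crossoverMass P i j k l)
      + C (∑ x, P x - crossoverMass P i j k l - crossoverMass P k l i j) * X
      + C (crossoverMass P k l i j) * X ^ 2 := by
  simp only [genFun, crossoverMass, Finset.sum_filter, ← Finset.sum_sub_distrib, map_sum,
    Finset.sum_mul, ← Finset.sum_add_distrib]
  refine Finset.sum_congr rfl fun x _ => ?_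
  by_cases hij : x i = x j <;> by_cases hkl : x k = x l <;> simp [crossoverStat, hij, hkl]

theorem tendsto_neg_inv_mul_log_iidProb_Ahat_le_Ahat (hP : ∀ x, 0 ≤ P x) (hP_sum : ∑ x, P x = 1)
    (hpos : 0 < crossoverMass P k l i j)
    (hle : crossoverMass P k l i j ≤ crossoverMass P i j k l) :
    Tendsto (fun n : ℕ => -(1 / (n : ℝ)) * Real.log (iidProb P n {xs | Ahat xs i j ≤ Ahat xs k l}))
      atTop (nhds (-Real.log (1 - (√(crossoverMass P i j k l) - √(crossoverMass P k l i j)) ^ 2)))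
      := by
  set a := crossoverMass P k l i j
  set b := crossoverMass P i j k l
  have sqrt_a_pos : 0 < √a := Real.sqrt_pos.mpr hpos
  have sqrt_b_pos : 0 < √b := Real.sqrt_pos.mpr (hpos.trans_le hle)
  have hG : genFun P (crossoverStat i j k l)
      = C (√b ^ 2) + C (1 - √b ^ 2 - √a ^ 2) * X + C (√a ^ 2) * X ^ 2 := by
    rw [Real.sq_sqrt hpos.le, Real.sq_sqrt (hpos.le.trans hle), genFun_crossoverStat, hP_sum]
  have one_le_tilt : 1 ≤ √b / √a := (one_le_div sqrt_a_pos).mpr (Real.sqrt_le_sqrt hle)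
  have tilted_palindromic :
      IsPalindromic (2 * 1) ((genFun P (crossoverStat i j k l)).comp (C (√b / √a) * X)) :=
    hG ▸ IsPalindromic.quadratic_comp_C_mul_X sqrt_a_pos.ne' _ _
  have rate_eq : (genFun P (crossoverStat i j k l)).eval (√b / √a) / (√b / √a) ^ 1
      = 1 - (√b - √a) ^ 2 := by
    simp only [hG, eval_add, eval_mul, eval_C, eval_X, eval_pow]
    field_simp
    ring
  have hcoeff : 0 < (genFun P (crossoverStat i j k l)).coeff 2 := by
    rw [genFun_crossoverStat]
    simpa only [coeff_add, coeff_C_mul, coeff_C_succ, coeff_X_of_ne_one (OfNat.ofNat_ne_one 2),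
      coeff_X_pow_self, mul_zero, mul_one, zero_add] using hpos
  have h := tendsto_neg_inv_mul_log_iidProb_of_isPalindromic hP one_le_tilt tilted_palindromic
    one_le_two hcoeff
  simpa only [rate_eq, one_mul, ← Ahat_le_Ahat_iff] using h

end Crossover

section Path

lemma isingP_nonneg {θ : ℝ} (hθ0 : 0 ≤ θ) (hθ1 : θ ≤ 1) {p : ℕ} (T : SimpleGraph (Fin p))
    (x : Fin p → Bool) : 0 ≤ isingP θ T x := by
  refine mul_nonneg (by norm_num) (Finset.prod_nonneg fun e _ => ?_)
  induction e with
  | _ i j =>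
    simp only [pairWeight, Sym2.lift_mk]
    split_ifs <;> linarith

lemma isingP_path4 (θ : ℝ) (x : Fin 4 → Bool) :
    isingP θ path4 x = 1 / 2 * ((if x 0 = x 1 then 1 - θ else θ) *
      ((if x 1 = x 2 then 1 - θ else θ) * (if x 2 = x 3 then 1 - θ else θ))) := by
  have edges : path4.edgeFinset = {s(0, 1), s(1, 2), s(2, 3)} := by
    ext e
    rw [SimpleGraph.mem_edgeFinset, path4, SimpleGraph.edgeSet_fromEdgeSet]
    simp only [Set.mem_sdiff, Set.mem_insert_iff, Set.mem_singleton_iff, Sym2.mem_diagSet,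
      Finset.mem_insert, Finset.mem_singleton, and_iff_left_iff_imp]
    rintro (rfl | rfl | rfl) <;> simp
  rw [isingP, edges, Finset.prod_insert (by decide), Finset.prod_insert (by decide),
    Finset.prod_singleton]
  simp [pairWeight]

lemma sum_pi_fin_succ {α M : Type*} [Fintype α] [AddCommMonoid M] {n : ℕ}
    (F : (Fin (n + 1) → α) → M) : ∑ x, F x = ∑ a, ∑ y, F (Matrix.vecCons a y) := by
  rw [← (Fin.consEquiv fun _ => α).sum_comp, Fintype.sum_prod_type]
  rfl

lemma sum_pi_fin_four {α M : Type*} [Fintype α] [AddCommMonoid M] (F : (Fin 4 → α) → M) :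
    ∑ x, F x = ∑ a₀, ∑ a₁, ∑ a₂, ∑ a₃, F ![a₀, a₁, a₂, a₃] := by
  simp only [sum_pi_fin_succ, Fintype.sum_unique, Matrix.vecCons]
  rfl

lemma sum_isingP_path4 (θ : ℝ) : ∑ x, isingP θ path4 x = 1 := by
  simp only [isingP_path4, sum_pi_fin_four, Fintype.sum_bool, Matrix.cons_val, reduceIte,
    reduceCtorEq]
  ring

lemma crossoverMass_path4_edge_nonedge (θ : ℝ) :
    crossoverMass (isingP θ path4) 0 1 0 3 = 2 * θ * (1 - θ) ^ 2 := by
  simp only [crossoverMass, isingP_path4, Finset.sum_filter, sum_pi_fin_four, Fintype.sum_bool,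
    Matrix.cons_val, reduceIte, reduceCtorEq, ne_eq, not_true, not_false_iff, and_true, and_false]
  ring

lemma crossoverMass_path4_nonedge_edge (θ : ℝ) :
    crossoverMass (isingP θ path4) 0 3 0 1 = 2 * θ ^ 2 * (1 - θ) := by
  simp only [crossoverMass, isingP_path4, Finset.sum_filter, sum_pi_fin_four, Fintype.sum_bool,
    Matrix.cons_val, reduceIte, reduceCtorEq, ne_eq, not_true, not_false_iff, and_true, and_false]
  ring

lemma sq_sqrt_crossoverMass_path4_sub {θ : ℝ} (hθ0 : 0 ≤ θ) (hθ1 : θ ≤ 1) :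
    (√(crossoverMass (isingP θ path4) 0 1 0 3) - √(crossoverMass (isingP θ path4) 0 3 0 1)) ^ 2
      = 2 * θ * (1 - θ) * (1 - √(4 * θ * (1 - θ))) := by
  have hθ' : 0 ≤ 1 - θ := sub_nonneg.mpr hθ1
  have cross_term : √(2 * θ * (1 - θ) ^ 2) * √(2 * θ ^ 2 * (1 - θ))
      = θ * (1 - θ) * √(4 * θ * (1 - θ)) := by
    rw [← Real.sqrt_mul (by positivity), ← Real.sqrt_sq (mul_nonneg hθ0 hθ'),
      ← Real.sqrt_mul (by positivity)]
    ring_nf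
  rw [crossoverMass_path4_edge_nonedge, crossoverMass_path4_nonedge_edge, sub_sq,
    Real.sq_sqrt (by positivity), Real.sq_sqrt (by positivity), mul_assoc 2 (√_), cross_term]
  ring

end Path

/-- for the 4-node path, the exponent of the non-neighbor crossover event
`{Â_{1,4} ≥ Â_{1,2}}` equals `-log(1 - 2θ(1-θ)(1 - √(4θ(1-θ))))`, which is strictly
larger than `K(θ)`; hence this event is not dominant. -/
theorem stmt13 (θ : ℝ) (hθ0 : 0 < θ) (hθ1 : θ < 1 / 2) :
    Filter.Tendsto (fun n : ℕ =>
      -(1 / (n : ℝ)) * Real.log (iidProb (isingP θ path4) n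
        {xs | Ahat xs 0 1 ≤ Ahat xs 0 3}))
      Filter.atTop
      (nhds (-Real.log (1 - 2 * θ * (1 - θ) * (1 - Real.sqrt (4 * θ * (1 - θ)))))) ∧
    (-Real.log (1 - θ * (1 - Real.sqrt (4 * θ * (1 - θ)))))
      < -Real.log (1 - 2 * θ * (1 - θ) * (1 - Real.sqrt (4 * θ * (1 - θ)))) := by
  have hθ' : 0 < 1 - θ := by linarith
  constructor
  · rw [← sq_sqrt_crossoverMass_path4_sub hθ0.le (by linarith)]
    refine tendsto_neg_inv_mul_log_iidProb_Ahat_le_Ahat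
      (isingP_nonneg hθ0.le (by linarith) path4) (sum_isingP_path4 θ) ?_ ?_
    · rw [crossoverMass_path4_nonedge_edge]
      positivity
    · rw [crossoverMass_path4_nonedge_edge, crossoverMass_path4_edge_nonedge]
      nlinarith [mul_pos hθ0 hθ']
  · have sqrt_lt_one : √(4 * θ * (1 - θ)) < 1 := by
      rw [Real.sqrt_lt' one_pos]
      nlinarith [sq_pos_of_pos (sub_pos.mpr hθ1)]
    have lt_two_mul : θ < 2 * θ * (1 - θ) := by nlinarith
    have sqrt_nonneg := Real.sqrt_nonneg (4 * θ * (1 - θ))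
    refine neg_lt_neg (Real.log_lt_log ?_ ?_)
    · nlinarith
    · gcongr
end
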